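/- Let k₁, k₂ > 1, t ∈ ℝ, 0 < φ < π, and ρ, σ ≥ 0. Then as x → +∞, [Φ_ρ, Φ_σ](x) = D⁺(ρ,σ)(ρ+σ)|x|^{i(σ−ρ)}(1 + O(1/x)), and as x → −∞, [Φ_ρ, Φ_σ](x) = −D⁻(ρ,σ)(ρ+σ)|x|^{i(σ−ρ)}(1 + O(1/x)), where D^{±}(ρ,σ) = (i/2π) e^{t(2φ−π)} e^{±(π/2)(ρ+σ+2t)}. -/

import Mathlib

noncomputable section

open MeasureTheory Filter Topology Set Asymptotics ComplexConjugate
open Complex (I)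

/-- Pochhammer symbol `(a)ₙ = a(a+1)⋯(a+n-1)`. -/
def poch (a : ℂ) (n : ℕ) : ℂ := ∏ k ∈ Finset.range n, (a + k)

/-- Generalized hypergeometric series `ₚF_q(a; b; z)` as a sum. -/
def pFq (a b : List ℂ) (z : ℂ) : ℂ :=
  ∑' n : ℕ, ((a.map fun c => poch c n).prod / (b.map fun c => poch c n).prod) * z ^ n /
    (n.factorial : ℂ)

def F32 (a b c d e z : ℂ) : ℂ := pFq [a, b, c] [d, e] z

/-- The weight function `w(z)`. -/
def wfun (k₁ k₂ t φ : ℝ) (z : ℂ) : ℂ :=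
  ((1 / (2 * Real.pi) : ℝ) : ℂ) *
    Complex.exp ((2 * z + (t : ℂ)) * (2 * (φ : ℂ) - (Real.pi : ℂ))) *
    Complex.Gamma ((k₁ : ℂ) + I * t + I * z) * Complex.Gamma ((k₁ : ℂ) - I * t - I * z) *
    Complex.Gamma ((k₂ : ℂ) + I * z) * Complex.Gamma ((k₂ : ℂ) - I * z)

/-- `α₋(z) = −e^{−2iφ}(k₂ + iz)(k₁ + i(t+z))`. -/
def alphaM (k₁ k₂ t φ : ℝ) (z : ℂ) : ℂ :=
  -Complex.exp (-2 * I * φ) * ((k₂ : ℂ) + I * z) * ((k₁ : ℂ) + I * ((t : ℂ) + z))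

/-- `f*(z) = conj (f (conj z))`. -/
def fstar (f : ℂ → ℂ) (z : ℂ) : ℂ := conj (f (conj z))

/-- The Wronskian `[f,g](y)`, an integral along the vertical segment from `y` to `y+i`. -/
def Wron (k₁ k₂ t φ : ℝ) (f g : ℂ → ℂ) (y : ℝ) : ℂ :=
  ∫ s in (0:ℝ)..1, I *
    ((f ((y : ℂ) + I * s) * fstar g ((y : ℂ) + I * s - I) -
        f ((y : ℂ) + I * s - I) * fstar g ((y : ℂ) + I * s)) *
      alphaM k₁ k₂ t φ ((y : ℂ) + I * s) * wfun k₁ k₂ t φ ((y : ℂ) + I * s))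

/-- The `i`-periodic function `p(z) = (1/π) e^{πz} sin(π(k₁ − it − iz))`. -/
def pper (k₁ t : ℝ) (z : ℂ) : ℂ :=
  (1 / (Real.pi : ℂ)) * Complex.exp ((Real.pi : ℂ) * z) *
    Complex.sin ((Real.pi : ℂ) * ((k₁ : ℂ) - I * t - I * z))

/-- The second eigenfunction `Φ_ρ`. -/
def PhiC (k₁ k₂ t φ : ℝ) (ρ : ℂ) (z : ℂ) : ℂ :=
  Complex.exp (-2 * (φ : ℂ) * z) * pper k₁ t z *
    (Complex.Gamma (1 - (k₁ : ℂ) + I * t + I * z) * Complex.Gamma (1 - (k₂ : ℂ) + I * z) /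
      (Complex.Gamma ((k₁ : ℂ) + I * z + I * t) *
        Complex.Gamma (3/2 - (k₁ : ℂ) + I * z + I * ρ))) *
    F32 ((k₂ : ℂ) - (k₁ : ℂ) + 1/2 + I * ρ) (3/2 - (k₁ : ℂ) - (k₂ : ℂ) + I * ρ)
      (1/2 - I * t + I * ρ) (1 + 2 * I * ρ) (3/2 - (k₁ : ℂ) + I * z + I * ρ) 1

/-- The constant `D^{±}(ρ,σ) = (i/2π) e^{t(2φ−π)} e^{±(π/2)(ρ+σ+2t)}`. -/
def Dpm (t φ : ℝ) (sgn : ℝ) (ρ σ : ℝ) : ℂ :=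
  (I / ((2 * Real.pi : ℝ) : ℂ)) * Complex.exp (((t * (2 * φ - Real.pi) : ℝ) : ℂ)) *
    Complex.exp (((sgn * (Real.pi / 2) * (ρ + σ + 2 * t) : ℝ) : ℂ))

/-!
In the variable `u = iz` the eigenfunction is `Φ_ρ(z) = e^{(π - 2φ)z} f_ρ(u)`, where `f_ρ` is a
quotient of Gamma functions times a `₃F₂` at `1`. The exponentials cancel against the weight, and
the Wronskian becomes the integral over the segment from `ix - 1` to `ix` of a weighted Casoratian
of `f_ρ(u)` and the reflected function `f_σ^*(u)`.

Along the strip `-1 ≤ Re u ≤ 0` the Gamma quotients satisfy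
`Γ(u + a) / Γ(u + b) = e^{(a - b) log (i Im u)} (1 + O(1/u))`, which produces the factor
`±D^± |x|^{i(σ - ρ)} u`. The `₃F₂` factors are `1 + c/u + O(1/u²)`; in the Casoratian the constants
`1` and the coefficients `c` cancel and `i(ρ + σ)/u` remains.

If `ρ + σ = 0` the error term has to vanish identically. Then `f_ρ(u)` and `f_σ^*(u)` solve the same
second-order difference equation, so by Abel's identity the integrand has period `1`. By Cauchy's
theorem its integral does not depend on `x` near `±∞`, and it tends to `0` by the first part.
-/

open Bornology (cobounded eventually_ne_cobounded)

section Pochhammer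

lemma poch_zero (a : ℂ) : poch a 0 = 1 := by simp [poch]

lemma poch_succ (a : ℂ) (n : ℕ) : poch a (n + 1) = poch a n * (a + n) := by
  simp [poch, Finset.prod_range_succ]

lemma poch_one (n : ℕ) : poch 1 n = n.factorial := by
  induction n with
  | zero => simp [poch]
  | succ n ih => rw [poch_succ, ih, Nat.factorial_succ]; push_cast; ring

lemma mul_poch_add_one (a : ℂ) (n : ℕ) : a * poch (a + 1) n = poch a n * (a + n) := by
  induction n with
  | zero => simp [poch]
  | succ n ih => rw [poch_succ, poch_succ, ← mul_assoc, ih]; push_cast; ring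

lemma poch_add_two (a : ℂ) (n : ℕ) :
    poch a (n + 2) = a * (a + 1) * ∏ k ∈ Finset.range n, (a + ((k + 2 : ℕ) : ℂ)) := by
  simp only [poch, Finset.prod_range_succ']
  push_cast
  ring_nf

lemma poch_ne_zero {a : ℂ} (ha : ∀ n : ℕ, a + n ≠ 0) (n : ℕ) : poch a n ≠ 0 :=
  Finset.prod_ne_zero_iff.2 fun k _ => ha k

lemma add_natCast_ne_zero_of_im_ne_zero {a : ℂ} (ha : a.im ≠ 0) (n : ℕ) : a + n ≠ 0 :=
  fun h => ha (by simpa using congrArg Complex.im h)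

lemma poch_neg_natCast_eq_zero {m n : ℕ} (h : m < n) : poch (-(m : ℂ)) n = 0 :=
  Finset.prod_eq_zero (Finset.mem_range.2 h) (by simp)

lemma norm_GammaSeq (a : ℂ) {n : ℕ} (hn : 0 < n) :
    ‖Complex.GammaSeq a n‖ = (n : ℝ) ^ a.re * n.factorial * ‖(poch a (n + 1))⁻¹‖ := by
  rw [norm_inv, ← div_eq_mul_inv]
  simp [Complex.GammaSeq, poch, Complex.norm_natCast_cpow_of_pos hn]

lemma inv_poch_isBigO (a : ℂ) : (fun n : ℕ => (poch a (n + 1))⁻¹)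
    =O[atTop] fun n : ℕ => ((n : ℝ) ^ a.re * n.factorial)⁻¹ := by
  have hΓ := (Complex.GammaSeq_tendsto_Gamma a).isBigO_one ℝ
  refine (((isBigO_refl _ _).mul hΓ.norm_left).congr' ?_
    (.of_forall fun n => mul_one _)).of_norm_left
  filter_upwards [eventually_gt_atTop 0] with n hn
  rw [norm_GammaSeq a hn, inv_mul_cancel_left₀ (by positivity)]

lemma poch_isBigO (a : ℂ) : (fun n : ℕ => poch a (n + 1))
    =O[atTop] fun n : ℕ => (n : ℝ) ^ a.re * n.factorial := by
  by_cases ha : ∀ m : ℕ, a ≠ -m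
  · have hΓ := ((Complex.GammaSeq_tendsto_Gamma a).inv₀ (Complex.Gamma_ne_zero ha)).isBigO_one ℝ
    refine (((isBigO_refl _ _).mul hΓ.norm_left).congr' ?_
      (.of_forall fun n => mul_one _)).of_norm_left
    filter_upwards [eventually_gt_atTop 0] with n hn
    rw [norm_inv, norm_GammaSeq a hn, mul_inv, norm_inv, inv_inv,
      mul_inv_cancel_left₀ (by positivity)]
  · push Not at ha
    obtain ⟨m, rfl⟩ := ha
    refine (isBigO_zero _ _).congr' ?_ .rfl
    filter_upwards [eventually_gt_atTop m] with n hn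
    rw [poch_neg_natCast_eq_zero (by omega)]

end Pochhammer

section HypergeometricSeries

variable (A B C D e : ℂ)

/-- The `n`-th term of the series `₃F₂(A, B, C; D, e; 1)`, with `n!` written as `poch 1 n`. -/
def F32Term (n : ℕ) : ℂ :=
  poch A n * poch B n * poch C n / (poch D n * poch 1 n * poch e n)

lemma F32_eq_tsum : F32 A B C D e 1 = ∑' n, F32Term A B C D e n := by
  refine tsum_congr fun n => ?_
  simp only [List.map_cons, List.map_nil, List.prod_cons, List.prod_nil, F32Term, poch_one,
    one_pow, mul_one]
  rw [div_div]
  congr 1 <;> ring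

lemma F32Term_succ (n : ℕ) : F32Term A B C D e (n + 1) =
    F32Term A B C D e n * ((A + n) * (B + n) * (C + n) / ((D + n) * (1 + n) * (e + n))) := by
  simp only [F32Term, poch_succ]
  rw [div_mul_div_comm]
  congr 1 <;> ring

lemma F32Term_isBigO : (fun n : ℕ => F32Term A B C D e (n + 1))
    =O[atTop] fun n : ℕ => (n : ℝ) ^ ((A + B + C - D - e).re - 1) := by
  have h := (((poch_isBigO A).mul (poch_isBigO B)).mul (poch_isBigO C)).mul
    (((inv_poch_isBigO D).mul (inv_poch_isBigO 1)).mul (inv_poch_isBigO e))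
  refine h.congr' (.of_forall fun n => ?_) ?_
  · simp only [F32Term, div_eq_mul_inv, mul_inv]
  · filter_upwards [eventually_gt_atTop 0] with n hn
    have hn' : (0 : ℝ) < n := by exact_mod_cast hn
    have : (A + B + C - D - e).re - 1 =
        A.re + B.re + C.re - (D.re + (1 : ℂ).re + e.re) := by
      simp only [Complex.sub_re, Complex.add_re, Complex.one_re]
      ring
    rw [this, Real.rpow_sub hn', Real.rpow_add hn', Real.rpow_add hn', Real.rpow_add hn',
      Real.rpow_add hn']
    field_simp

variable {A B C D e}

lemma summable_norm_F32Term (h : (A + B + C - D - e).re < 0) :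
    Summable fun n => ‖F32Term A B C D e n‖ := by
  rw [← summable_nat_add_iff 1]
  exact summable_of_isBigO_nat (Real.summable_nat_rpow.2 (by linarith))
    (F32Term_isBigO A B C D e).norm_left

lemma tendsto_mul_F32Term_zero (h : (A + B + C - D - e).re < -1) (c : ℂ) :
    Tendsto (fun n : ℕ => (n : ℂ) * (n + c) * F32Term A B C D e n) atTop (𝓝 0) := by
  rw [← tendsto_add_atTop_iff_nat 1]
  have hcast : Tendsto (fun n : ℕ => ‖(n : ℝ)‖) atTop atTop :=
    tendsto_norm_atTop_atTop.comp tendsto_natCast_atTop_atTop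
  have hlin (c : ℂ) : (fun n : ℕ => ((n : ℂ) + c)) =O[atTop] fun n : ℕ => (n : ℝ) :=
    (isBigO_of_le _ fun n => by simp).add (isLittleO_const_left.2 (.inr hcast)).isBigO
  have hO := ((hlin 1).mul (hlin (1 + c))).mul (F32Term_isBigO A B C D e)
  have h0 : Tendsto (fun n : ℕ => (n : ℝ) ^ ((A + B + C - D - e).re + 1)) atTop (𝓝 0) := by
    simpa [Function.comp_def] using (tendsto_rpow_neg_atTop
      (y := -((A + B + C - D - e).re + 1)) (by linarith)).comp tendsto_natCast_atTop_atTop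
  refine IsBigO.trans_tendsto (hO.congr' (.of_forall fun n => ?_) ?_) h0
  · push_cast
    ring
  · filter_upwards [eventually_gt_atTop 0] with n hn
    have hn' : (0 : ℝ) < n := by exact_mod_cast hn
    rw [← sq, ← Real.rpow_two, ← Real.rpow_add hn']
    ring_nf

lemma F32Term_add_one_mul (he : ∀ n : ℕ, e + n ≠ 0) (n : ℕ) :
    F32Term A B C D (e + 1) n * (e + n) = F32Term A B C D e n * e := by
  have hpoch : poch (e + 1) n = poch e n * (e + n) / e := by
    rw [eq_div_iff (by simpa using he 0), mul_comm, mul_poch_add_one]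
  have := he n
  have he0 : e ≠ 0 := by simpa using he 0
  have := poch_ne_zero he n
  simp only [F32Term, hpoch, ← div_div _ (poch D n * poch 1 n)]
  field_simp

lemma F32Term_telescope (hD : ∀ n : ℕ, D + n ≠ 0) (he : ∀ n : ℕ, e - 1 + n ≠ 0) (n : ℕ) :
    e * (e - 1) * (D + e - A - B - C - 1) * F32Term A B C D (e - 1) n +
        (e - A) * (e - B) * (e - C) * F32Term A B C D (e + 1) n -
        (e * (D + e - A - B - C - 1) * (e - 1) + (e - A) * (e - B) * (e - C) + A * B * C) *
          F32Term A B C D e n =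
      -e * (((n + 1 : ℕ) : ℂ) * ((n + 1 : ℕ) + (D - 1)) * F32Term A B C D e (n + 1)) -
        -e * ((n : ℂ) * (n + (D - 1)) * F32Term A B C D e n) := by
  have he' (n : ℕ) : e + n ≠ 0 := by
    convert he (n + 1) using 1
    push_cast
    ring
  have he1 : e - 1 ≠ 0 := by simpa using he 0
  have hpred : F32Term A B C D (e - 1) n = F32Term A B C D e n * (e - 1 + n) / (e - 1) := by
    have := F32Term_add_one_mul (A := A) (B := B) (C := C) (D := D) he n
    rw [sub_add_cancel] at this
    rw [this, mul_div_cancel_right₀ _ he1]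
  have hsucc : F32Term A B C D (e + 1) n = F32Term A B C D e n * e / (e + n) := by
    rw [eq_div_iff (he' n), F32Term_add_one_mul he']
  have hn : (1 + (n : ℂ)) ≠ 0 := by
    rw [add_comm]
    exact Nat.cast_add_one_ne_zero n
  have := he' n
  have := hD n
  rw [F32Term_succ, hpred, hsucc]
  push_cast
  field_simp
  ring

lemma F32_three_term (h : (A + B + C - D - (e - 1)).re < 0) (hD : ∀ n : ℕ, D + n ≠ 0)
    (he : ∀ n : ℕ, e - 1 + n ≠ 0) :
    e * (e - 1) * (D + e - A - B - C - 1) * F32 A B C D (e - 1) 1 +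
        (e - A) * (e - B) * (e - C) * F32 A B C D (e + 1) 1 =
      (e * (D + e - A - B - C - 1) * (e - 1) + (e - A) * (e - B) * (e - C) + A * B * C) *
        F32 A B C D e 1 := by
  simp only [Complex.sub_re, Complex.add_re, Complex.one_re] at h
  have hpred := (summable_norm_F32Term (A := A) (B := B) (C := C) (D := D) (e := e - 1)
    (by simpa using h)).of_norm.hasSum
  have hself := (summable_norm_F32Term (A := A) (B := B) (C := C) (D := D) (e := e)
    (by simp only [Complex.sub_re, Complex.add_re]; linarith)).of_norm.hasSum
  have hsucc := (summable_norm_F32Term (A := A) (B := B) (C := C) (D := D) (e := e + 1)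
    (by simp only [Complex.sub_re, Complex.add_re, Complex.one_re]; linarith)).of_norm.hasSum
  have hpartial := (((hpred.mul_left (e * (e - 1) * (D + e - A - B - C - 1))).add
    (hsucc.mul_left ((e - A) * (e - B) * (e - C)))).sub (hself.mul_left
      (e * (D + e - A - B - C - 1) * (e - 1) + (e - A) * (e - B) * (e - C) + A * B * C))
    ).tendsto_sum_nat
  have hboundary := (tendsto_mul_F32Term_zero (A := A) (B := B) (C := C) (D := D) (e := e)
    (by simp only [Complex.sub_re, Complex.add_re]; linarith) (D - 1)).const_mul (-e)
  simp only [F32Term_telescope hD he, Finset.sum_range_sub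
    (fun n : ℕ => -e * ((n : ℂ) * (n + (D - 1)) * F32Term A B C D e n))] at hpartial
  simp only [F32_eq_tsum]
  refine sub_eq_zero.1 (tendsto_nhds_unique hpartial ?_)
  simpa using hboundary

end HypergeometricSeries

section VerticalStrip

/-- The filter of points of the strip `a ≤ Re u ≤ b` going to infinity, upwards or downwards. -/
def vstrip (a b : ℝ) : Filter ℂ :=
  comap (fun u => |u.im|) atTop ⊓ 𝓟 {u | u.re ∈ Icc a b}

variable {a b : ℝ}

lemma eventually_vstrip {p : ℂ → Prop} :
    (∀ᶠ u in vstrip a b, p u) ↔ ∃ N, ∀ u : ℂ, u.re ∈ Icc a b → N ≤ |u.im| → p u := by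
  simp only [vstrip, eventually_inf_principal, eventually_comap, eventually_atTop]
  refine exists_congr fun N => ⟨fun h u hu hN => h _ hN u rfl hu, ?_⟩
  rintro h y hy u rfl hu
  exact h u hu hy

lemma eventually_re_mem_Icc_vstrip : ∀ᶠ u in vstrip a b, u.re ∈ Icc a b :=
  eventually_vstrip.2 ⟨0, fun _ hu _ => hu⟩

lemma eventually_le_abs_im_vstrip (c : ℝ) : ∀ᶠ u in vstrip a b, c ≤ |u.im| :=
  eventually_vstrip.2 ⟨c, fun _ _ hu => hu⟩

lemma eventually_im_add_ne_zero_vstrip (c : ℝ) : ∀ᶠ u in vstrip a b, u.im + c ≠ 0 := by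
  filter_upwards [eventually_le_abs_im_vstrip (|c| + 1)] with u hu h
  rw [eq_neg_of_add_eq_zero_left h, abs_neg] at hu
  linarith

lemma eventually_im_ne_zero_vstrip : ∀ᶠ u in vstrip a b, u.im ≠ 0 := by
  simpa using eventually_im_add_ne_zero_vstrip (a := a) (b := b) 0

lemma vstrip_le_cobounded : vstrip a b ≤ cobounded ℂ := by
  rw [← tendsto_id', ← tendsto_norm_atTop_iff_cobounded]
  exact tendsto_atTop_mono Complex.abs_im_le_norm (tendsto_comap.mono_left inf_le_left)

lemma tendsto_im_vstrip : Tendsto Complex.im (vstrip a b) (cobounded ℝ) :=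
  tendsto_norm_atTop_iff_cobounded.1 (tendsto_comap.mono_left inf_le_left)

lemma tendsto_add_const_vstrip (c : ℂ) :
    Tendsto (fun u => u + c) (vstrip a b) (vstrip (a + c.re) (b + c.re)) := by
  refine tendsto_iff_eventually.2 fun p hp => ?_
  obtain ⟨N, hN⟩ := eventually_vstrip.1 hp
  refine eventually_vstrip.2 ⟨N + |c.im|, fun u hu him => hN _ ?_ ?_⟩
  · simpa using hu
  · have := abs_sub_abs_le_abs_sub u.im (-c.im)
    rw [abs_neg, sub_neg_eq_add] at this
    rw [Complex.add_im]
    linarith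

lemma tendsto_neg_vstrip : Tendsto (fun u : ℂ => -u) (vstrip a b) (vstrip (-b) (-a)) := by
  refine tendsto_iff_eventually.2 fun p hp => ?_
  obtain ⟨N, hN⟩ := eventually_vstrip.1 hp
  refine eventually_vstrip.2 ⟨N, fun u hu him => hN _ ?_ ?_⟩
  · simpa [and_comm] using hu
  · simpa using him

lemma isBigO_im_vstrip : (fun u : ℂ => u) =O[vstrip a b] fun u => u.im := by
  refine IsBigO.of_bound (max |a| |b| + 1) ?_
  filter_upwards [eventually_re_mem_Icc_vstrip, eventually_le_abs_im_vstrip 1] with u hre him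
  have hre' : |u.re| ≤ max |a| |b| := abs_le_max_abs_abs hre.1 hre.2
  have := Complex.norm_le_abs_re_add_abs_im u
  rw [Real.norm_eq_abs]
  nlinarith [abs_nonneg u.re]

lemma inv_im_isBigO_vstrip : (fun u : ℂ => (u.im)⁻¹) =O[vstrip a b] fun u => u⁻¹ := by
  refine isBigO_im_vstrip.inv_rev (vstrip_le_cobounded ?_)
  filter_upwards [eventually_ne_cobounded 0] with u hu h using absurd h hu

end VerticalStrip

section Expansions

/-- `f u = 1 + O(1/u)` along the filter `L`. -/
def IsOneAddBigOInv (L : Filter ℂ) (f : ℂ → ℂ) : Prop :=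
  (fun u => f u - 1) =O[L] fun u => u⁻¹

/-- `f u = 1 + a/u + O(1/u²)` along the filter `L`. -/
def HasInvExpansion (L : Filter ℂ) (f : ℂ → ℂ) (a : ℂ) : Prop :=
  (fun u => f u - 1 - a * u⁻¹) =O[L] fun u => u⁻¹ ^ 2

variable {L L' : Filter ℂ} {f g : ℂ → ℂ} {a b : ℂ}

lemma inv_isBigO_one (hL : L ≤ cobounded ℂ) :
    (fun u : ℂ => u⁻¹) =O[L] fun _ => (1 : ℂ) :=
  (tendsto_inv₀_cobounded.mono_left hL).isBigO_one ℂ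

lemma inv_sq_isBigO_inv (hL : L ≤ cobounded ℂ) :
    (fun u : ℂ => u⁻¹ ^ 2) =O[L] fun u => u⁻¹ := by
  simpa [sq] using (inv_isBigO_one hL).mul (isBigO_refl (fun u : ℂ => u⁻¹) L)

lemma isBigO_add_const (hL : L ≤ cobounded ℂ) {η : ℂ} (hη : η ≠ 0) (c : ℂ) :
    (fun u : ℂ => u) =O[L] fun u => η * u + c := by
  have hηu : (fun u : ℂ => u) =O[L] fun u => η * u :=
    (isBigO_const_mul_self η⁻¹ _ L).congr_left fun u => by rw [inv_mul_cancel_left₀ hη]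
  have hc : (fun _ : ℂ => c) =o[L] fun u => η * u :=
    (isLittleO_const_left.2 (.inr (tendsto_norm_cobounded_atTop.mono_left hL))).trans_isBigO hηu
  exact hηu.trans hc.right_isBigO_add'

lemma inv_affine_isBigO (hL : L ≤ cobounded ℂ) {η : ℂ} (hη : η ≠ 0) (c : ℂ) :
    (fun u : ℂ => (η * u + c)⁻¹) =O[L] fun u => u⁻¹ := by
  refine (isBigO_add_const hL hη c).inv_rev (hL ?_)
  filter_upwards [eventually_ne_cobounded 0] with u hu h using absurd h hu

namespace IsOneAddBigOInv

lemma congr' (hf : IsOneAddBigOInv L f) (h : f =ᶠ[L] g) : IsOneAddBigOInv L g :=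
  IsBigO.congr' hf (h.mono fun u hu => by simp only [hu]) .rfl

lemma tendsto_one (hL : L ≤ cobounded ℂ) (hf : IsOneAddBigOInv L f) :
    Tendsto f L (𝓝 1) :=
  tendsto_sub_nhds_zero_iff.1 (hf.trans_tendsto (tendsto_inv₀_cobounded.mono_left hL))

lemma mul (hL : L ≤ cobounded ℂ) (hf : IsOneAddBigOInv L f)
    (hg : IsOneAddBigOInv L g) : IsOneAddBigOInv L fun u => f u * g u := by
  have := (IsBigO.mul hf ((hg.tendsto_one hL).isBigO_one ℂ)).congr_right fun u => mul_one _
  exact (this.add hg).congr_left fun u => by ring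

lemma comp_affine {η c : ℂ} (hη : η ≠ 0) (hL' : L' ≤ cobounded ℂ)
    (hf : IsOneAddBigOInv L f) (hlim : Tendsto (fun u => η * u + c) L' L) :
    IsOneAddBigOInv L' fun u => f (η * u + c) :=
  (IsBigO.comp_tendsto hf hlim).trans (inv_affine_isBigO hL' hη c)

end IsOneAddBigOInv

namespace HasInvExpansion

lemma isOneAddBigOInv (hL : L ≤ cobounded ℂ) (hf : HasInvExpansion L f a) :
    IsOneAddBigOInv L f :=
  ((IsBigO.trans hf (inv_sq_isBigO_inv hL)).add (isBigO_const_mul_self a (fun u => u⁻¹) L)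
    ).congr_left fun u => by ring

lemma congr' (hf : HasInvExpansion L f a) (h : f =ᶠ[L] g) : HasInvExpansion L g a :=
  IsBigO.congr' hf (h.mono fun u hu => by simp only [hu]) .rfl

lemma mul (hL : L ≤ cobounded ℂ) (hf : HasInvExpansion L f a)
    (hg : HasInvExpansion L g b) : HasInvExpansion L (fun u => f u * g u) (a + b) := by
  have hg₁ := hg.isOneAddBigOInv hL
  have hfst := (IsBigO.mul hf ((hg₁.tendsto_one hL).isBigO_one ℂ)).congr_right fun u => mul_one _
  have hcross : (fun u => a * u⁻¹ * (g u - 1)) =O[L] fun u => u⁻¹ ^ 2 :=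
    ((isBigO_const_mul_self a (fun u => u⁻¹) L).mul hg₁).congr_right fun u => by ring
  exact ((hfst.add hg).add hcross).congr_left fun u => by ring

lemma inv (hL : L ≤ cobounded ℂ) (hf : HasInvExpansion L f a) :
    HasInvExpansion L (fun u => (f u)⁻¹) (-a) := by
  have hf₁ := hf.isOneAddBigOInv hL
  have hlim := hf₁.tendsto_one hL
  have hcross : (fun u => a * u⁻¹ * (f u - 1)) =O[L] fun u => u⁻¹ ^ 2 :=
    ((isBigO_const_mul_self a (fun u => u⁻¹) L).mul hf₁).congr_right fun u => by ring
  refine (((hlim.inv₀ one_ne_zero).isBigO_one ℂ).mul (hcross.sub hf)).congr' ?_ (by simp)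
  filter_upwards [hlim.eventually_ne one_ne_zero] with u hu
  field_simp
  ring

lemma comp_affine {η c : ℂ} (hη : η ≠ 0) (hL' : L' ≤ cobounded ℂ)
    (hf : HasInvExpansion L f a) (hlim : Tendsto (fun u => η * u + c) L' L) :
    HasInvExpansion L' (fun u => f (η * u + c)) (a * η⁻¹) := by
  have hinv := inv_affine_isBigO hL' hη c
  have hmain := (IsBigO.comp_tendsto hf hlim).trans (hinv.pow 2)
  have hshift : (fun u => a * ((η * u + c)⁻¹ - η⁻¹ * u⁻¹)) =O[L'] fun u => u⁻¹ ^ 2 := by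
    refine ((hinv.mul (isBigO_refl (fun u => u⁻¹) L')).const_mul_left (-a * η⁻¹ * c)).congr'
      ?_ (.of_forall fun u => (sq _).symm)
    have hne : ∀ᶠ u in L', η * u + c ≠ 0 := by
      filter_upwards [((tendsto_inv₀_cobounded.mono_left hL').const_mul c).eventually_ne
        (show c * 0 ≠ -η by simpa using hη), hL' (eventually_ne_cobounded 0)] with u hu h0 h
      refine hu (mul_right_cancel₀ h0 ?_)
      rw [inv_mul_cancel_right₀ h0]
      linear_combination h
    filter_upwards [hne, hL' (eventually_ne_cobounded 0)] with u hu h0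
    field_simp
    ring
  exact (hmain.add hshift).congr_left fun u => by simp only [Function.comp_apply]; ring

lemma comp_add_const {r s : ℝ} (c : ℂ) (hf : HasInvExpansion (vstrip (r + c.re) (s + c.re)) f a) :
    HasInvExpansion (vstrip r s) (fun u => f (u + c)) a := by
  simpa only [one_mul, inv_one, mul_one] using hf.comp_affine one_ne_zero vstrip_le_cobounded
    (by simpa only [one_mul] using tendsto_add_const_vstrip c)

lemma comp_neg {r s : ℝ} (hf : HasInvExpansion (vstrip (-s) (-r)) f a) :
    HasInvExpansion (vstrip r s) (fun u => f (-u)) (-a) := by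
  simpa [inv_neg] using hf.comp_affine (η := -1) (c := 0) (by simp) vstrip_le_cobounded
    (by simpa using tendsto_neg_vstrip)

lemma add_const_div (hL : L ≤ cobounded ℂ) (p : ℂ) :
    HasInvExpansion L (fun u => (u + p) * u⁻¹) p := by
  refine (isBigO_zero _ _).congr' ?_ .rfl
  filter_upwards [hL (eventually_ne_cobounded 0)] with u hu
  field_simp
  ring

lemma add_const_div_add_const (hL : L ≤ cobounded ℂ) (p q : ℂ) :
    HasInvExpansion L (fun u => (u + p) / (u + q)) (p - q) := by
  refine (((add_const_div hL p).mul hL ((add_const_div hL q).inv hL)).congr' ?_)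
  filter_upwards [hL (eventually_ne_cobounded 0)] with u hu
  rw [mul_inv, inv_inv, div_eq_mul_inv]
  field_simp

lemma mul_sub_isBigO (hL : L ≤ cobounded ℂ) (hf : HasInvExpansion L f a)
    (hg : HasInvExpansion L g b) :
    (fun u => u * (f u - g u) - (a - b)) =O[L] fun u => u⁻¹ := by
  refine ((isBigO_refl (fun u : ℂ => u) L).mul (IsBigO.sub hf hg)).congr' ?_ ?_
  all_goals
    filter_upwards [hL (eventually_ne_cobounded 0)] with u hu
    field_simp
    try ring

end HasInvExpansion

end Expansions

section HypergeometricAsymptotics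

variable {A B C D e : ℂ} {r : ℝ}

lemma norm_add_I_add_natCast_le (hre : r ≤ e.re) (him : |r| + 1 ≤ |e.im|) (j : ℕ) :
    ‖(r : ℂ) + I + j‖ ≤ ‖e + j‖ := by
  rw [← sq_le_sq₀ (norm_nonneg _) (norm_nonneg _), ← Complex.normSq_eq_norm_sq,
    ← Complex.normSq_eq_norm_sq, Complex.normSq_apply, Complex.normSq_apply]
  simp only [Complex.add_re, Complex.add_im, Complex.ofReal_re, Complex.ofReal_im, Complex.I_re,
    Complex.I_im, Complex.natCast_re, Complex.natCast_im, add_zero, zero_add]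
  have him_sq : (|r| + 1) ^ 2 ≤ e.im * e.im := by
    rw [← sq, ← sq_abs e.im]
    gcongr
  rcases le_or_gt 0 (r + j) with hrj | hrj
  · nlinarith [abs_nonneg r]
  · rw [abs_of_neg (by linarith : r < 0)] at him_sq
    nlinarith [mul_self_nonneg (e.re + j)]

lemma im_ne_zero_of_abs_add_one_le (him : |r| + 1 ≤ |e.im|) : e.im ≠ 0 :=
  abs_pos.1 (by linarith [abs_nonneg r])

lemma poch_ne_zero_of_im_ne_zero (he : e.im ≠ 0) (n : ℕ) : poch e n ≠ 0 :=
  poch_ne_zero (add_natCast_ne_zero_of_im_ne_zero he) n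

lemma norm_F32Term_le (hre : r ≤ e.re) (him : |r| + 1 ≤ |e.im|) (n : ℕ) :
    ‖F32Term A B C D e n‖ ≤ ‖F32Term A B C D (r + I) n‖ := by
  have hpos : 0 < ‖poch ((r : ℂ) + I) n‖ :=
    norm_pos_iff.2 (poch_ne_zero_of_im_ne_zero (by simp) n)
  have hpoch : ‖poch ((r : ℂ) + I) n‖ ≤ ‖poch e n‖ := by
    simp only [poch, norm_prod]
    exact Finset.prod_le_prod (fun _ _ => norm_nonneg _)
      fun j _ => norm_add_I_add_natCast_le hre him j
  simp only [F32Term, norm_div, norm_mul]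
  rw [← div_div, ← div_div _ _ ‖poch (_ + I) n‖]
  gcongr

lemma norm_poch_add_two_mul_sq_le (hre : r ≤ e.re) (him : |r| + 1 ≤ |e.im|) (n : ℕ) :
    ‖poch ((r : ℂ) + I) (n + 2)‖ * |e.im| ^ 2 ≤
      ‖(r : ℂ) + I‖ * ‖(r : ℂ) + I + 1‖ * ‖poch e (n + 2)‖ := by
  simp only [poch_add_two, norm_mul, norm_prod]
  have htail := Finset.prod_le_prod (s := Finset.range n) (fun _ _ => norm_nonneg _)
    fun j _ => norm_add_I_add_natCast_le hre him (j + 2)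
  have hhead : |e.im| ^ 2 ≤ ‖e‖ * ‖e + 1‖ := by
    rw [sq]
    exact mul_le_mul (Complex.abs_im_le_norm e) (by simpa using Complex.abs_im_le_norm (e + 1))
      (abs_nonneg _) (norm_nonneg _)
  calc _ ≤ (‖(r : ℂ) + I‖ * ‖(r : ℂ) + I + 1‖ *
        ∏ k ∈ Finset.range n, ‖e + ((k + 2 : ℕ) : ℂ)‖) * (‖e‖ * ‖e + 1‖) := by gcongr
    _ = _ := by ring

lemma norm_F32Term_add_two_le (hre : r ≤ e.re) (him : |r| + 1 ≤ |e.im|) (n : ℕ) :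
    ‖F32Term A B C D e (n + 2)‖ ≤ ‖F32Term A B C D (r + I) (n + 2)‖ *
      (‖(r : ℂ) + I‖ * ‖(r : ℂ) + I + 1‖ / |e.im| ^ 2) := by
  have he := im_ne_zero_of_abs_add_one_le him
  have hr : 0 < ‖poch ((r : ℂ) + I) (n + 2)‖ :=
    norm_pos_iff.2 (poch_ne_zero_of_im_ne_zero (by simp) _)
  have hpos : 0 < ‖poch e (n + 2)‖ := norm_pos_iff.2 (poch_ne_zero_of_im_ne_zero he _)
  have := abs_pos.2 he
  simp only [F32Term, norm_div, norm_mul]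
  rw [← div_div, ← div_div _ _ ‖poch (_ + I) (n + 2)‖, div_mul_div_comm,
    div_le_div_iff₀ hpos (by positivity)]
  refine (mul_le_mul_of_nonneg_left (norm_poch_add_two_mul_sq_le hre him n)
    (by positivity)).trans_eq ?_
  ring

lemma summable_norm_F32Term_add_I (h : (A + B + C - D).re < r) :
    Summable fun n => ‖F32Term A B C D (r + I) n‖ :=
  summable_norm_F32Term (by rw [Complex.sub_re]; simpa using h)

lemma norm_F32_sub_le (h : (A + B + C - D).re < r) :
    ∃ K : ℝ, ∀ e : ℂ, r ≤ e.re → |r| + 1 ≤ |e.im| →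
      ‖F32 A B C D e 1 - 1 - A * B * C / D * e⁻¹‖ ≤ K * ‖|e.im|⁻¹ ^ 2‖ := by
  have hr := summable_norm_F32Term_add_I h
  refine ⟨(∑' n, ‖F32Term A B C D (r + I) (n + 2)‖) * (‖(r : ℂ) + I‖ * ‖(r : ℂ) + I + 1‖),
    fun e hre him => ?_⟩
  have he : Summable fun n => ‖F32Term A B C D e n‖ :=
    hr.of_nonneg_of_le (fun _ => norm_nonneg _) (norm_F32Term_le hre him)
  have hhead : ∑ n ∈ Finset.range 2, F32Term A B C D e n = 1 + A * B * C / D * e⁻¹ := by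
    simp only [Finset.sum_range_succ, Finset.sum_range_zero, F32Term, poch, Finset.prod_range_succ,
      Finset.prod_range_zero]
    ring_nf
  rw [F32_eq_tsum, ← he.of_norm.sum_add_tsum_nat_add 2, hhead, add_sub_right_comm,
    add_sub_cancel_left, add_sub_cancel_left, mul_assoc, ← tsum_mul_right]
  have he₂ := (summable_nat_add_iff 2).2 he
  refine (norm_tsum_le_tsum_norm he₂).trans
    (he₂.tsum_le_tsum (fun n => ?_) (((summable_nat_add_iff 2).2 hr).mul_right _))
  simpa [div_eq_mul_inv] using norm_F32Term_add_two_le hre him n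

lemma hasInvExpansion_F32 (h : (A + B + C - D).re < r) (s : ℝ) :
    HasInvExpansion (vstrip r s) (fun e => F32 A B C D e 1) (A * B * C / D) := by
  obtain ⟨K, hK⟩ := norm_F32_sub_le h
  refine (IsBigO.of_bound K ?_).trans (inv_im_isBigO_vstrip.pow 2)
  filter_upwards [eventually_re_mem_Icc_vstrip, eventually_le_abs_im_vstrip (|r| + 1)]
    with e hre him
  simpa using hK e hre.1 him

lemma differentiableAt_F32 (h : (A + B + C - D).re < r) (hre : r < e.re)
    (him : |r| + 1 < |e.im|) : DifferentiableAt ℂ (fun e => F32 A B C D e 1) e := by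
  have hopen : IsOpen {e : ℂ | r < e.re ∧ |r| + 1 < |e.im|} :=
    (isOpen_lt continuous_const Complex.continuous_re).inter
      (isOpen_lt continuous_const Complex.continuous_im.abs)
  have hdiff := Complex.differentiableOn_tsum_of_summable_norm
    (F := fun n e => F32Term A B C D e n) (summable_norm_F32Term_add_I h)
    (fun n e he => ?_) hopen (fun n e he => norm_F32Term_le he.1.le he.2.le n)
  · simp only [F32_eq_tsum]
    exact hdiff.differentiableAt (hopen.mem_nhds ⟨hre, him⟩)
  · have hpoch : DifferentiableAt ℂ (fun e => poch e n) e := by unfold poch; fun_prop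
    have hne := poch_ne_zero_of_im_ne_zero (im_ne_zero_of_abs_add_one_le he.2.le) n
    simp only [F32Term, ← div_div _ (poch D n * poch 1 n)]
    exact ((differentiableAt_const _).div hpoch hne).differentiableWithinAt

lemma conj_poch (a : ℂ) (n : ℕ) : conj (poch a n) = poch (conj a) n := by
  simp [poch, map_prod]

lemma conj_F32 (A B C D e : ℂ) :
    conj (F32 A B C D e 1) = F32 (conj A) (conj B) (conj C) (conj D) (conj e) 1 := by
  simp only [F32_eq_tsum, Complex.conj_tsum, F32Term, map_div₀, map_mul, conj_poch, map_one]

end HypergeometricAsymptotics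

section GammaRatio

variable {a b u : ℂ}

lemma log_sub_log_of_im_mul_pos {w w' : ℂ} (h : 0 < w.im * w'.im) :
    Complex.log w' - Complex.log w = Complex.log (w' / w) := by
  have hw : w ≠ 0 := by rintro rfl; simp at h
  have hw' : w' ≠ 0 := by rintro rfl; simp at h
  have hexp : w' / w = Complex.exp (Complex.log w' - Complex.log w) := by
    rw [Complex.exp_sub, Complex.exp_log hw, Complex.exp_log hw']
  rw [hexp, Complex.log_exp]
  all_goals
    simp only [Complex.sub_im, Complex.log_im]
    rcases pos_and_pos_or_neg_and_neg_of_mul_pos h with ⟨hpos, hpos'⟩ | ⟨hneg, hneg'⟩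
  · linarith [Complex.arg_nonneg_iff.2 hpos'.le, Complex.arg_lt_pi_iff.2 (.inr hpos.ne')]
  · linarith [Complex.neg_pi_lt_arg w', Complex.arg_neg_iff.2 hneg]
  · linarith [Complex.arg_nonneg_iff.2 hpos.le, Complex.arg_le_pi w']
  · linarith [Complex.neg_pi_lt_arg w, Complex.arg_neg_iff.2 hneg']

lemma Gamma_ne_zero_of_im_ne_zero (hu : u.im ≠ 0) : Complex.Gamma u ≠ 0 :=
  Complex.Gamma_ne_zero fun m h => hu (by simp [h])

lemma hasInvExpansion_of_analyticAt {L : Filter ℂ} (hL : L ≤ cobounded ℂ) {g : ℂ → ℂ}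
    (hg : AnalyticAt ℂ g 0) (hg0 : g 0 = 1) :
    HasInvExpansion L (fun u => g u⁻¹) (deriv g 0) := by
  obtain ⟨p, hp⟩ := hg
  refine ((hp.isBigO_sub_partialSum_pow 2).comp_tendsto
    (tendsto_inv₀_cobounded.mono_left hL)).congr_left (fun u => ?_) |>.trans
      (IsBigO.of_norm_left (isBigO_of_le _ fun u => by simp))
  have hp0 : p.coeff 0 = 1 := (hp.coeff_zero _).trans hg0
  have hp1 : p.coeff 1 = deriv g 0 := hp.deriv.symm
  simp [FormalMultilinearSeries.partialSum, Finset.sum_range_succ, hp0, hp1, sub_sub, mul_comm]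

lemma hasInvExpansion_exp_log_add_one (κ : ℂ) :
    HasInvExpansion (cobounded ℂ ⊓ 𝓟 {w | w.im ≠ 0})
      (fun w => Complex.exp (κ * (Complex.log (w + 1) - Complex.log w))) κ := by
  have hlog : HasDerivAt (fun h : ℂ => Complex.log (1 + h)) 1 0 := by
    simpa using ((hasDerivAt_id (0 : ℂ)).const_add 1).clog (by simp)
  have hderiv : deriv (fun h : ℂ => Complex.exp (κ * Complex.log (1 + h))) 0 = κ := by
    simpa using (hlog.const_mul κ).cexp.deriv
  have han : AnalyticAt ℂ (fun h : ℂ => Complex.exp (κ * Complex.log (1 + h))) 0 := by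
    have : AnalyticAt ℂ (fun h : ℂ => Complex.log (1 + h)) 0 :=
      AnalyticAt.clog (by fun_prop) (by simp)
    fun_prop
  have hexp := hasInvExpansion_of_analyticAt (L := cobounded ℂ ⊓ 𝓟 {w | w.im ≠ 0}) inf_le_left
    han (by simp)
  rw [hderiv] at hexp
  refine hexp.congr' (eventually_inf_principal.2 (.of_forall fun w hw => ?_))
  have hw0 : w ≠ 0 := fun h => hw (by simp [h])
  have him : 0 < w.im * (w + 1).im := by simpa using mul_self_pos.2 hw
  simp only [log_sub_log_of_im_mul_pos him, add_div, div_self hw0, one_div]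

/-- The ratio `Γ(u + a) / Γ(u + b)` divided by its leading behaviour `u ^ (a - b)`. -/
def normGammaRatio (a b u : ℂ) : ℂ :=
  Complex.Gamma (u + a) / Complex.Gamma (u + b) * Complex.exp ((b - a) * Complex.log u)

/-- The factor `q` in `normGammaRatio a b u = q u * normGammaRatio a b (u + 1)`. -/
def normGammaRatioStep (a b u : ℂ) : ℂ :=
  (u + b) / (u + a) * Complex.exp ((a - b) * (Complex.log (u + 1) - Complex.log u))

lemma normGammaRatioStep_mul_add_one (ha : (u + a).im ≠ 0) (hb : (u + b).im ≠ 0) :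
    normGammaRatioStep a b u * normGammaRatio a b (u + 1) = normGammaRatio a b u := by
  have ha0 : u + a ≠ 0 := fun h => ha (by simp [h])
  have hb0 : u + b ≠ 0 := fun h => hb (by simp [h])
  have := Gamma_ne_zero_of_im_ne_zero hb
  have hexp : Complex.exp ((b - a) * Complex.log u) =
      Complex.exp ((a - b) * (Complex.log (u + 1) - Complex.log u)) *
        Complex.exp ((b - a) * Complex.log (u + 1)) := by
    rw [← Complex.exp_add]
    ring_nf
  rw [normGammaRatioStep, normGammaRatio, normGammaRatio, add_right_comm u 1 a,
    add_right_comm u 1 b, Complex.Gamma_add_one _ ha0, Complex.Gamma_add_one _ hb0, hexp]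
  field_simp

lemma prod_normGammaRatioStep_mul (ha : (u + a).im ≠ 0) (hb : (u + b).im ≠ 0) (n : ℕ) :
    (∏ j ∈ Finset.range n, normGammaRatioStep a b (u + j)) * normGammaRatio a b (u + n) =
      normGammaRatio a b u := by
  induction n with
  | zero => simp
  | succ n ih =>
    rw [Finset.prod_range_succ, mul_assoc, Nat.cast_add_one, ← add_assoc,
      normGammaRatioStep_mul_add_one (by simpa using ha) (by simpa using hb), ih]

lemma Gamma_add_natCast (hu : u.im ≠ 0) (n : ℕ) :
    Complex.Gamma (u + n) = poch u n * Complex.Gamma u := by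
  induction n with
  | zero => simp [poch]
  | succ n ih =>
    rw [Nat.cast_add_one, ← add_assoc,
      Complex.Gamma_add_one _ (add_natCast_ne_zero_of_im_ne_zero hu n), ih, poch_succ]
    ring

lemma tendsto_GammaSeq_div_Gamma (hu : u.im ≠ 0) :
    Tendsto (fun n : ℕ => Complex.exp (Complex.log n * u) * n.factorial /
      Complex.Gamma (u + (n + 1 : ℕ))) atTop (𝓝 1) := by
  have hΓ := Gamma_ne_zero_of_im_ne_zero hu
  have hlim := (Complex.GammaSeq_tendsto_Gamma u).div_const (Complex.Gamma u)
  rw [div_self hΓ] at hlim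
  refine hlim.congr' ?_
  filter_upwards [eventually_ne_atTop 0] with n hn
  rw [Gamma_add_natCast hu, Complex.GammaSeq, Complex.cpow_def_of_ne_zero (by simpa using hn),
    ← div_div, poch]

lemma tendsto_log_add_natCast_sub_log (hu : u.im ≠ 0) :
    Tendsto (fun n : ℕ => Complex.log (u + (n + 1 : ℕ)) - Complex.log n) atTop (𝓝 0) := by
  have hquot : Tendsto (fun n : ℕ => (u + 1) * (n : ℂ)⁻¹ + 1) atTop (𝓝 1) := by
    simpa using (tendsto_inv_atTop_nhds_zero_nat.const_mul (u + 1)).add_const 1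
  have hlog := hquot.clog (by simp)
  rw [Complex.log_one] at hlog
  refine hlog.congr' ?_
  filter_upwards [eventually_gt_atTop 0] with n hn
  have hn' : (0 : ℝ) < n := by exact_mod_cast hn
  have hn0 : (n : ℂ) ≠ 0 := by exact_mod_cast hn.ne'
  have := Complex.log_ofReal_mul (inv_pos.2 hn')
    (add_natCast_ne_zero_of_im_ne_zero hu (n + 1))
  rw [Real.log_inv, Complex.ofReal_neg, Complex.ofReal_inv, Complex.ofReal_natCast,
    Complex.natCast_log, neg_add_eq_sub] at this
  rw [← this]
  congr 1
  push_cast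
  field_simp
  ring

lemma tendsto_normGammaRatio_add_natCast (hu : u.im ≠ 0) (ha : (u + a).im ≠ 0)
    (hb : (u + b).im ≠ 0) :
    Tendsto (fun n : ℕ => normGammaRatio a b (u + n)) atTop (𝓝 1) := by
  rw [← tendsto_add_atTop_iff_nat 1]
  have hexp : Tendsto (fun n : ℕ => Complex.exp ((b - a) *
      (Complex.log (u + (n + 1 : ℕ)) - Complex.log n))) atTop (𝓝 1) := by
    simpa using ((tendsto_log_add_natCast_sub_log hu).const_mul (b - a)).cexp
  have hlim := ((tendsto_GammaSeq_div_Gamma hb).div (tendsto_GammaSeq_div_Gamma ha)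
    one_ne_zero).mul hexp
  rw [div_one, mul_one] at hlim
  refine hlim.congr fun n => ?_
  have hΓa : Complex.Gamma (u + a + (n + 1 : ℕ)) ≠ 0 :=
    Gamma_ne_zero_of_im_ne_zero (by simpa using ha)
  have hΓb : Complex.Gamma (u + b + (n + 1 : ℕ)) ≠ 0 :=
    Gamma_ne_zero_of_im_ne_zero (by simpa using hb)
  have hfac : (n.factorial : ℂ) ≠ 0 := by exact_mod_cast n.factorial_ne_zero
  have hsplit : Complex.exp (Complex.log n * (u + b)) * Complex.exp ((b - a) *
      (Complex.log (u + (n + 1 : ℕ)) - Complex.log n)) =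
      Complex.exp (Complex.log n * (u + a)) *
        Complex.exp ((b - a) * Complex.log (u + (n + 1 : ℕ))) := by
    rw [← Complex.exp_add, ← Complex.exp_add]
    ring_nf
  have := Complex.exp_ne_zero ((u + a) * Complex.log n)
  rw [normGammaRatio, add_right_comm u _ a, add_right_comm u _ b, Pi.div_apply]
  field_simp
  linear_combination hsplit

lemma exists_norm_normGammaRatioStep_sub_one_le (a b : ℂ) :
    ∃ K M : ℝ, 0 < K ∧ ∀ w : ℂ, w.im ≠ 0 → M ≤ ‖w‖ →
      ‖normGammaRatioStep a b w - 1‖ ≤ K * (1 / ‖w‖ ^ 2) := by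
  have hexp := (HasInvExpansion.add_const_div_add_const inf_le_left b a).mul inf_le_left
    (hasInvExpansion_exp_log_add_one (a - b))
  obtain ⟨K, hK, hbound⟩ := IsBigO.exists_pos hexp
  rw [IsBigOWith, eventually_inf_principal, ← comap_norm_atTop, eventually_comap,
    eventually_atTop] at hbound
  obtain ⟨M, hM⟩ := hbound
  refine ⟨K, M, hK, fun w hw hwM => ?_⟩
  simpa [normGammaRatioStep] using hM _ hwM w rfl hw

lemma sum_one_div_norm_add_natCast_sq_le (hre : |u.re| ≤ |u.im|) (him : 1 ≤ |u.im|) (n : ℕ) :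
    ∑ j ∈ Finset.range n, 1 / ‖u + j‖ ^ 2 ≤ 18 / |u.im| := by
  set Y := |u.im|
  have hterm (j : ℕ) : 1 / ‖u + j‖ ^ 2 ≤ 18 * (1 / (j + Y) - 1 / ((j + 1 : ℕ) + Y)) := by
    have hnorm : ‖u + j‖ ^ 2 = (u.re + j) ^ 2 + Y ^ 2 := by
      rw [Complex.sq_norm, Complex.normSq_apply, sq_abs]
      simp only [Complex.add_re, Complex.natCast_re, Complex.add_im, Complex.natCast_im, add_zero]
      ring
    have hle : (j + Y) * (j + 1 + Y) ≤ 18 * ((u.re + j) ^ 2 + Y ^ 2) := by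
      have := (abs_le.1 hre).1
      nlinarith [sq_nonneg (u.re + j - 3 * Y)]
    rw [hnorm, Nat.cast_add_one, div_sub_div _ _ (by positivity) (by positivity), mul_div_assoc',
      div_le_div_iff₀ (by positivity) (by positivity)]
    linarith
  calc _ ≤ ∑ j ∈ Finset.range n, 18 * (1 / (j + Y) - 1 / ((j + 1 : ℕ) + Y)) :=
        Finset.sum_le_sum fun j _ => hterm j
    _ = 18 / Y - 18 * (1 / (n + Y)) := by
        rw [← Finset.mul_sum, Finset.sum_range_sub' (fun j : ℕ => 1 / (j + Y))]
        simp only [Nat.cast_zero, zero_add]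
        ring
    _ ≤ _ := sub_le_self _ (by positivity)

lemma norm_prod_sub_one_le {ι : Type*} (s : Finset ι) (f : ι → ℂ) {ε : ℝ} (hε : ε ≤ 1)
    (h : ∑ i ∈ s, ‖f i - 1‖ ≤ ε) : ‖∏ i ∈ s, f i - 1‖ ≤ 2 * ε := by
  have hε0 : 0 ≤ ε := (Finset.sum_nonneg fun _ _ => norm_nonneg _).trans h
  have hprod := s.norm_prod_one_add_sub_one_le (fun i => f i - 1)
  simp only [add_sub_cancel] at hprod
  have hexp := Real.abs_exp_sub_one_le (x := ε) (by rwa [abs_of_nonneg hε0])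
  rw [abs_of_nonneg hε0] at hexp
  linarith [le_abs_self (Real.exp ε - 1), Real.exp_le_exp.2 h]

lemma isOneAddBigOInv_normGammaRatio (a b : ℂ) (r s : ℝ) :
    IsOneAddBigOInv (vstrip r s) (normGammaRatio a b) := by
  obtain ⟨K, M, hK, hstep⟩ := exists_norm_normGammaRatioStep_sub_one_le a b
  refine (IsBigO.of_bound (36 * K) ?_).trans inv_im_isBigO_vstrip
  filter_upwards [eventually_re_mem_Icc_vstrip, eventually_le_abs_im_vstrip (max |r| |s|),
    eventually_le_abs_im_vstrip 1, eventually_le_abs_im_vstrip M,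
    eventually_le_abs_im_vstrip (18 * K), eventually_im_ne_zero_vstrip,
    eventually_im_add_ne_zero_vstrip a.im, eventually_im_add_ne_zero_vstrip b.im]
    with u hre hrs h1 hM hK' him ha hb
  have hlim := tendsto_normGammaRatio_add_natCast him ha hb
  have hsum (n : ℕ) :
      ∑ j ∈ Finset.range n, ‖normGammaRatioStep a b (u + j) - 1‖ ≤ K * (18 / |u.im|) := by
    refine le_trans (Finset.sum_le_sum fun j _ => hstep (u + j) (by simpa using him) ?_) ?_
    · exact hM.trans (by simpa using Complex.abs_im_le_norm (u + j))
    · rw [← Finset.mul_sum]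
      gcongr
      exact sum_one_div_norm_add_natCast_sq_le
        ((abs_le_max_abs_abs hre.1 hre.2).trans hrs) h1 n
  have hprod (n : ℕ) := norm_prod_sub_one_le _ _
    (by rw [mul_div_assoc', div_le_one (by positivity)]; linarith) (hsum n)
  have hdiff (n : ℕ) : ‖normGammaRatio a b u - normGammaRatio a b (u + n)‖ ≤
      2 * (K * (18 / |u.im|)) * ‖normGammaRatio a b (u + n)‖ := by
    rw [← prod_normGammaRatioStep_mul ha hb n, ← sub_one_mul, norm_mul]
    gcongr
    exact hprod n
  have := le_of_tendsto_of_tendsto' (hlim.const_sub _).norm (hlim.norm.const_mul _) hdiff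
  refine this.trans_eq ?_
  simp only [norm_one, mul_one, norm_inv, Real.norm_eq_abs]
  ring

end GammaRatio

section ImaginaryDirection

lemma log_I_mul_ofReal {y : ℝ} (hy : y ≠ 0) :
    Complex.log (I * y) = Real.log |y| + Real.sign y * (Real.pi / 2 * I) := by
  rcases lt_or_gt_of_ne hy with hneg | hpos
  · have hrw : I * (y : ℂ) = (-y : ℝ) * (-I) := by push_cast; ring
    rw [hrw, Complex.log_ofReal_mul (neg_pos.2 hneg) (by simp), Complex.log_neg_I,
      abs_of_neg hneg, Real.sign_of_neg hneg]
    push_cast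
    ring
  · rw [mul_comm I, Complex.log_ofReal_mul hpos Complex.I_ne_zero, Complex.log_I,
      abs_of_pos hpos, Real.sign_of_pos hpos]
    push_cast
    ring

variable {r s : ℝ}

lemma isOneAddBigOInv_exp_log_sub_log_im (κ : ℂ) :
    IsOneAddBigOInv (vstrip r s) fun u =>
      Complex.exp (κ * (Complex.log u - Complex.log (I * u.im))) := by
  have hderiv : HasDerivAt (fun h : ℂ => Complex.exp (κ * Complex.log (1 + h))) κ 0 := by
    simpa using ((((hasDerivAt_id (0 : ℂ)).const_add 1).clog (by simp)).const_mul κ).cexp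
  have hre : (fun u : ℂ => (u.re : ℂ)) =O[vstrip r s] fun _ => (1 : ℂ) := by
    refine IsBigO.of_bound (max |r| |s|) ?_
    filter_upwards [eventually_re_mem_Icc_vstrip] with u hu
    simpa using abs_le_max_abs_abs hu.1 hu.2
  have him : (fun u : ℂ => (I * (u.im : ℂ))⁻¹) =O[vstrip r s] fun u => u⁻¹ :=
    (isBigO_of_le _ fun u => by simp).trans inv_im_isBigO_vstrip
  have hsmall : (fun u : ℂ => (u.re : ℂ) * (I * u.im)⁻¹) =O[vstrip r s] fun u => u⁻¹ :=
    (hre.mul him).congr_right fun u => one_mul _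
  have hlim := hsmall.trans_tendsto (tendsto_inv₀_cobounded.mono_left vstrip_le_cobounded)
  have hO := (hderiv.differentiableAt.isBigO_sub.comp_tendsto hlim).trans
    (hsmall.congr_left fun u => (sub_zero _).symm)
  refine hO.congr' ?_ .rfl
  filter_upwards [eventually_im_ne_zero_vstrip] with u hu
  have hu' : (u.im : ℂ) ≠ 0 := by exact_mod_cast hu
  have hquot : u / (I * u.im) = 1 + u.re * (I * u.im)⁻¹ := by
    nth_rewrite 1 [← Complex.re_add_im u]
    field_simp
    ring
  rw [log_sub_log_of_im_mul_pos (by simpa using mul_self_pos.2 hu), hquot]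
  simp

lemma isOneAddBigOInv_Gamma_div_Gamma (a b : ℂ) :
    IsOneAddBigOInv (vstrip r s) fun u => Complex.Gamma (u + a) / Complex.Gamma (u + b) *
      Complex.exp ((b - a) * Complex.log (I * u.im)) := by
  refine ((isOneAddBigOInv_normGammaRatio a b r s).mul vstrip_le_cobounded
    (isOneAddBigOInv_exp_log_sub_log_im (a - b))).congr' (.of_forall fun u => ?_)
  simp only [normGammaRatio]
  rw [mul_assoc, ← Complex.exp_add]
  ring_nf

lemma isOneAddBigOInv_Gamma_div_Gamma_neg (a b : ℂ) :
    IsOneAddBigOInv (vstrip r s) fun u => Complex.Gamma (-u + a) / Complex.Gamma (-u + b) *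
      Complex.exp ((b - a) * Complex.log (I * (-u).im)) :=
  ((isOneAddBigOInv_Gamma_div_Gamma a b).comp_affine (η := -1) (c := 0) (by simp)
    vstrip_le_cobounded (by simpa using tendsto_neg_vstrip)).congr' (.of_forall fun u => by simp)

end ImaginaryDirection

section ReducedEigenfunction

/-- The `₃F₂` factor of `Φ_ρ(z)` in the variable `u = iz`. -/
def phiSeries (k₁ k₂ t ρ : ℝ) (u : ℂ) : ℂ :=
  F32 (k₂ - k₁ + 1 / 2 + I * ρ) (3 / 2 - k₁ - k₂ + I * ρ) (1 / 2 - I * t + I * ρ)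
    (1 + 2 * I * ρ) (u + (3 / 2 - k₁ + I * ρ)) 1

/-- The Gamma factor of `Φ_ρ(z)` in the variable `u = iz`, after the sine of `pper` has been
absorbed by the reflection formula. -/
def phiGamma (k₁ k₂ t ρ : ℝ) (u : ℂ) : ℂ :=
  Complex.Gamma (u + (1 - k₂)) /
    (Complex.Gamma (-u + (k₁ - I * t)) * Complex.Gamma (u + (k₁ + I * t)) *
      Complex.Gamma (u + (3 / 2 - k₁ + I * ρ)))

/-- `Φ_ρ(z)` without its exponential factor `e^{(π - 2φ)z}`, in the variable `u = iz`. -/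
def reducedPhi (k₁ k₂ t ρ : ℝ) (u : ℂ) : ℂ :=
  phiGamma k₁ k₂ t ρ u * phiSeries k₁ k₂ t ρ u

variable {k₁ k₂ t φ ρ : ℝ} {u z : ℂ}

lemma re_phiSeries_excess : ((k₂ - k₁ + 1 / 2 + I * ρ) + (3 / 2 - k₁ - k₂ + I * ρ) +
    (1 / 2 - I * t + I * ρ) - (1 + 2 * I * ρ) : ℂ).re = 3 / 2 - 2 * k₁ := by
  rw [show ((k₂ - k₁ + 1 / 2 + I * ρ) + (3 / 2 - k₁ - k₂ + I * ρ) + (1 / 2 - I * t + I * ρ) -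
    (1 + 2 * I * ρ) : ℂ) = (3 / 2 - 2 * k₁ : ℝ) + (ρ - t : ℝ) * I by push_cast; ring]
  rw [Complex.add_re, Complex.re_ofReal_mul, Complex.I_re, mul_zero, add_zero, Complex.ofReal_re]

lemma re_phiSeries_shift : (3 / 2 - k₁ + I * ρ : ℂ).re = 3 / 2 - k₁ := by
  simp

lemma conj_phiSeries : conj (phiSeries k₁ k₂ t ρ u) = phiSeries k₁ k₂ (-t) (-ρ) (conj u) := by
  rw [phiSeries, conj_F32, phiSeries]
  congr 1 <;>
  · simp [map_ofNat]

lemma conj_phiGamma : conj (phiGamma k₁ k₂ t ρ u) = phiGamma k₁ k₂ (-t) (-ρ) (conj u) := by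
  simp [phiGamma, ← Complex.Gamma_conj, map_ofNat]

lemma conj_reducedPhi :
    conj (reducedPhi k₁ k₂ t ρ u) = reducedPhi k₁ k₂ (-t) (-ρ) (conj u) := by
  rw [reducedPhi, map_mul, conj_phiGamma, conj_phiSeries, reducedPhi]

lemma inv_pi_mul_sin_mul_Gamma_one_sub {w : ℂ} (hw : w.im ≠ 0) :
    1 / (Real.pi : ℂ) * Complex.sin (Real.pi * w) * Complex.Gamma (1 - w) =
      (Complex.Gamma w)⁻¹ := by
  have hpi : (Real.pi : ℂ) ≠ 0 := Complex.ofReal_ne_zero.2 Real.pi_ne_zero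
  have hsin : Complex.sin (Real.pi * w) ≠ 0 := by
    refine Complex.sin_ne_zero_iff.2 fun k hk => hw ?_
    simp [mul_left_cancel₀ hpi (hk.trans (mul_comm _ _))]
  have hreflection := Complex.Gamma_mul_Gamma_one_sub w
  have hGamma := Gamma_ne_zero_of_im_ne_zero hw
  rw [eq_div_iff hsin] at hreflection
  field_simp
  linear_combination hreflection

lemma PhiC_eq_exp_mul_reducedPhi (hz : t + z.re ≠ 0) :
    PhiC k₁ k₂ t φ ρ z = Complex.exp ((Real.pi - 2 * φ) * z) * reducedPhi k₁ k₂ t ρ (I * z) := by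
  have hsin := inv_pi_mul_sin_mul_Gamma_one_sub (w := k₁ - I * t - I * z) (by
    contrapose! hz
    rw [← neg_eq_zero, neg_add']
    simpa using hz)
  have hexp : Complex.exp ((Real.pi - 2 * φ) * z) =
      Complex.exp (-2 * φ * z) * Complex.exp (Real.pi * z) := by
    rw [← Complex.exp_add]
    ring_nf
  rw [PhiC, pper, reducedPhi, phiGamma, phiSeries, hexp,
    show 1 - k₁ + I * t + I * z = 1 - (k₁ - I * t - I * z) by ring,
    show (k₁ : ℂ) + I * z + I * t = I * z + (k₁ + I * t) by ring,
    show 3 / 2 - k₁ + I * z + I * ρ = I * z + (3 / 2 - k₁ + I * ρ) by ring,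
    show 1 - k₂ + I * z = I * z + (1 - k₂) by ring,
    show -(I * z) + (k₁ - I * t) = k₁ - I * t - I * z by ring,
    mul_assoc (Complex.Gamma _) (Complex.Gamma _) (Complex.Gamma _),
    div_mul_eq_div_mul_one_div _ (Complex.Gamma (k₁ - I * t - I * z)),
    div_eq_mul_inv _ (Complex.Gamma (k₁ - I * t - I * z)), ← hsin]
  ring

lemma fstar_PhiC_eq_exp_mul_reducedPhi (hz : t + z.re ≠ 0) :
    fstar (PhiC k₁ k₂ t φ ρ) z =
      Complex.exp ((Real.pi - 2 * φ) * z) * reducedPhi k₁ k₂ (-t) (-ρ) (-(I * z)) := by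
  rw [fstar, PhiC_eq_exp_mul_reducedPhi (by simpa using hz), map_mul, conj_reducedPhi,
    ← Complex.exp_conj]
  simp [map_ofNat]

lemma mul_phiGamma_add_one (hu : u.im ≠ 0) (hut : u.im + t ≠ 0) (huρ : u.im + ρ ≠ 0) :
    (u + k₁ + I * t) * (u + 3 / 2 - k₁ + I * ρ) * phiGamma k₁ k₂ t ρ (u + 1) =
      -((u + 1 - k₂) * (u + 1 - k₁ + I * t)) * phiGamma k₁ k₂ t ρ u := by
  have him : ∀ c : ℂ, u.im + c.im ≠ 0 → u + c ≠ 0 :=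
    fun c hc h => hc (by simp [← Complex.add_im, h])
  have h₁ : u + (1 - k₂) ≠ 0 := him _ (by simpa using hu)
  have h₂ : u + (k₁ + I * t) ≠ 0 := him _ (by simpa using hut)
  have h₃ : u + (3 / 2 - k₁ + I * ρ) ≠ 0 := him _ (by simpa using huρ)
  have h₄ : -(u + 1) + (k₁ - I * t) ≠ 0 := by
    rw [show -(u + 1) + (k₁ - I * t) = -(u + (1 - k₁ + I * t)) by ring]
    exact neg_ne_zero.2 (him _ (by simpa using hut))
  have hneg := Complex.Gamma_add_one _ h₄
  rw [show -(u + 1) + (k₁ - I * t) + 1 = -u + (k₁ - I * t) by ring] at hneg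
  rw [phiGamma, phiGamma, add_right_comm u 1, add_right_comm u 1, add_right_comm u 1,
    Complex.Gamma_add_one _ h₁, Complex.Gamma_add_one _ h₂, Complex.Gamma_add_one _ h₃, hneg,
    show u + k₁ + I * t = u + (k₁ + I * t) by ring,
    show u + 3 / 2 - k₁ + I * ρ = u + (3 / 2 - k₁ + I * ρ) by ring,
    show -((u + 1 - k₂) * (u + 1 - k₁ + I * t)) =
      (u + (1 - k₂)) * (-(u + 1) + (k₁ - I * t)) by ring]
  generalize (3 / 2 - k₁ + I * ρ : ℂ) = c at h₃ ⊢
  field_simp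

end ReducedEigenfunction

section DifferenceEquation

/-- The Casoratian `f(u) g(u+1) - f(u+1) g(u)`, the discrete analogue of the Wronskian
determinant. -/
def casoratian (f g : ℂ → ℂ) (u : ℂ) : ℂ :=
  f u * g (u + 1) - f (u + 1) * g u

lemma mul_casoratian_eq {f g : ℂ → ℂ} {a b M u : ℂ}
    (hf : a * f (u + 1) + b * f (u - 1) = M * f u)
    (hg : a * g (u + 1) + b * g (u - 1) = M * g u) :
    a * casoratian f g u = b * casoratian f g (u - 1) := by
  rw [casoratian, casoratian, sub_add_cancel]
  linear_combination f u * hg - g u * hf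

/-- The coefficient of `f(u)` in the second-order difference equation solved by `reducedPhi`. -/
def differenceCoeff (k₁ k₂ t ρ : ℝ) (u : ℂ) : ℂ :=
  -2 * u ^ 2 - 2 * I * t * u + k₁ ^ 2 - k₁ + (k₂ - 1 / 2) ^ 2 + ρ ^ 2

/-- The four Gamma factors of the weight function `wfun` in the variable `u = iz`. -/
def gammaWeight (k₁ k₂ t : ℝ) (u : ℂ) : ℂ :=
  Complex.Gamma (u + (k₁ + I * t)) * Complex.Gamma (-u + (k₁ - I * t)) *
    Complex.Gamma (u + k₂) * Complex.Gamma (-u + k₂)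

variable {k₁ k₂ t ρ σ : ℝ} {u : ℂ}

lemma im_neg_add_sub_ne_zero (hut : u.im + t ≠ 0) : (-u + (k₁ - I * t)).im ≠ 0 := by
  rw [show -u + (k₁ - I * t) = -(u - k₁ + I * t) by ring, Complex.neg_im, neg_ne_zero]
  simpa using hut

lemma phiSeries_three_term (hre : 1 - k₁ < u.re) (huρ : u.im + ρ ≠ 0) :
    (u + 3 / 2 - k₁ + I * ρ) * (u + 1 / 2 - k₁ + I * ρ) * (u - 1 + k₁ + I * t) *
          phiSeries k₁ k₂ t ρ (u - 1) +
        (u + 1 - k₂) * (u + k₂) * (u + 1 - k₁ + I * t) * phiSeries k₁ k₂ t ρ (u + 1) =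
      -(u + 3 / 2 - k₁ + I * ρ) * differenceCoeff k₁ k₂ t ρ u * phiSeries k₁ k₂ t ρ u := by
  have h := F32_three_term (A := k₂ - k₁ + 1 / 2 + I * ρ) (B := 3 / 2 - k₁ - k₂ + I * ρ)
    (C := 1 / 2 - I * t + I * ρ) (D := 1 + 2 * I * ρ) (e := u + (3 / 2 - k₁ + I * ρ))
    (by
      rw [Complex.sub_re, re_phiSeries_excess, Complex.sub_re, Complex.add_re, re_phiSeries_shift,
        Complex.one_re]
      linarith)
    (fun n h => by
      have hre : (1 + 2 * I * ρ + n : ℂ).re = 1 + n := by simp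
      rw [h, Complex.zero_re] at hre
      linarith [n.cast_nonneg (α := ℝ)])
    (fun n h => huρ (by simpa using congrArg Complex.im h))
  rw [show u + (3 / 2 - k₁ + I * ρ) - 1 = u - 1 + (3 / 2 - k₁ + I * ρ) by ring,
    show u + (3 / 2 - k₁ + I * ρ) + 1 = u + 1 + (3 / 2 - k₁ + I * ρ) by ring,
    ← phiSeries, ← phiSeries, ← phiSeries] at h
  rw [differenceCoeff]
  linear_combination
    h + (u + 3 / 2 - k₁ + I * ρ) * ρ ^ 2 * phiSeries k₁ k₂ t ρ u * Complex.I_sq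

lemma reducedPhi_difference_equation (hre : 1 - k₁ < u.re) (hu : u.im ≠ 0) (hut : u.im + t ≠ 0)
    (huρ : u.im + ρ ≠ 0) :
    (u + k₂) * (u + k₁ + I * t) * reducedPhi k₁ k₂ t ρ (u + 1) +
        (u - k₂) * (u - k₁ + I * t) * reducedPhi k₁ k₂ t ρ (u - 1) =
      differenceCoeff k₁ k₂ t ρ u * reducedPhi k₁ k₂ t ρ u := by
  have hup := mul_phiGamma_add_one (k₁ := k₁) (k₂ := k₂) hu hut huρ
  have hdown := mul_phiGamma_add_one (k₁ := k₁) (k₂ := k₂) (u := u - 1)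
    (by simpa using hu) (by simpa using hut) (by simpa using huρ)
  have hthree := phiSeries_three_term (k₂ := k₂) (t := t) hre huρ
  have he : u + 3 / 2 - k₁ + I * ρ ≠ 0 := fun h => huρ (by simpa using congrArg Complex.im h)
  rw [sub_add_cancel] at hdown
  refine mul_left_cancel₀ he ?_
  simp only [reducedPhi]
  linear_combination (u + k₂) * phiSeries k₁ k₂ t ρ (u + 1) * hup +
    (u + 3 / 2 - k₁ + I * ρ) * phiSeries k₁ k₂ t ρ (u - 1) * hdown -
    phiGamma k₁ k₂ t ρ u * hthree

lemma reducedPhi_neg_difference_equation (hre : u.re < k₁ - 1) (hu : u.im ≠ 0)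
    (hut : u.im + t ≠ 0) (huρ : u.im + ρ ≠ 0) :
    (u + k₂) * (u + k₁ + I * t) * reducedPhi k₁ k₂ (-t) (-ρ) (-(u + 1)) +
        (u - k₂) * (u - k₁ + I * t) * reducedPhi k₁ k₂ (-t) (-ρ) (-(u - 1)) =
      differenceCoeff k₁ k₂ t ρ u * reducedPhi k₁ k₂ (-t) (-ρ) (-u) := by
  have h := reducedPhi_difference_equation (k₁ := k₁) (k₂ := k₂) (t := -t) (ρ := -ρ) (u := -u)
    (by rw [Complex.neg_re]; linarith) (by simpa using hu)
    (fun h => hut (by rw [Complex.neg_im] at h; linarith))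
    (fun h => huρ (by rw [Complex.neg_im] at h; linarith))
  rw [show -u + 1 = -(u - 1) by ring, show -u - 1 = -(u + 1) by ring] at h
  simp only [differenceCoeff] at h ⊢
  push_cast at h
  linear_combination h

lemma mul_gammaWeight_sub_one (hu : u.im ≠ 0) (hut : u.im + t ≠ 0) :
    (u - 1 + k₂) * (u - 1 + k₁ + I * t) * gammaWeight k₁ k₂ t (u - 1) =
      (u - k₂) * (u - k₁ + I * t) * gammaWeight k₁ k₂ t u := by
  have h₁ : u - 1 + (k₁ + I * t) ≠ 0 := fun h => hut (by simpa using congrArg Complex.im h)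
  have h₂ : -u + (k₁ - I * t) ≠ 0 := fun h =>
    im_neg_add_sub_ne_zero hut (by rw [h, Complex.zero_im])
  have h₃ : u - 1 + k₂ ≠ 0 := fun h => hu (by simpa using congrArg Complex.im h)
  have h₄ : -u + k₂ ≠ 0 := fun h => hu (by simpa using congrArg Complex.im h)
  have hG₁ := Complex.Gamma_add_one _ h₁
  have hG₂ := Complex.Gamma_add_one _ h₂
  have hG₃ := Complex.Gamma_add_one _ h₃
  have hG₄ := Complex.Gamma_add_one _ h₄
  rw [show u - 1 + (k₁ + I * t) + 1 = u + (k₁ + I * t) by ring] at hG₁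
  rw [show u - 1 + k₂ + 1 = u + k₂ by ring] at hG₃
  rw [gammaWeight, gammaWeight, show -(u - 1) + (k₁ - I * t) = -u + (k₁ - I * t) + 1 by ring,
    show -(u - 1) + k₂ = -u + k₂ + 1 by ring, hG₁, hG₂, hG₃, hG₄]
  ring

end DifferenceEquation

section WronskianIntegrand

/-- The integrand of the Wronskian `[Φ_ρ, Φ_σ]` in the variable `u = iz`. -/
def wronIntegrand (k₁ k₂ t φ ρ σ : ℝ) (u : ℂ) : ℂ :=
  Complex.exp (t * (2 * φ - Real.pi)) / (2 * Real.pi) *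
    ((u + k₂) * (u + k₁ + I * t) * gammaWeight k₁ k₂ t u *
      casoratian (reducedPhi k₁ k₂ t ρ) (fun u => reducedPhi k₁ k₂ (-t) (-σ) (-u)) u)

variable {k₁ k₂ t φ ρ σ : ℝ} {u z : ℂ}

lemma wfun_eq_gammaWeight :
    wfun k₁ k₂ t φ z = 1 / (2 * Real.pi) * Complex.exp ((2 * z + t) * (2 * φ - Real.pi)) *
      gammaWeight k₁ k₂ t (I * z) := by
  rw [wfun, gammaWeight, show I * z + (k₁ + I * t) = k₁ + I * t + I * z by ring,
    show -(I * z) + (k₁ - I * t) = k₁ - I * t - I * z by ring, add_comm (I * z) (k₂ : ℂ),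
    neg_add_eq_sub]
  push_cast
  ring

lemma wron_integrand_eq (hz : t + z.re ≠ 0) :
    (PhiC k₁ k₂ t φ ρ z * fstar (PhiC k₁ k₂ t φ σ) (z - I) -
        PhiC k₁ k₂ t φ ρ (z - I) * fstar (PhiC k₁ k₂ t φ σ) z) *
      alphaM k₁ k₂ t φ z * wfun k₁ k₂ t φ z = wronIntegrand k₁ k₂ t φ ρ σ (I * z) := by
  have hexp : Complex.exp ((Real.pi - 2 * φ) * z) * Complex.exp ((Real.pi - 2 * φ) * (z - I)) *
      Complex.exp (-2 * I * φ) * Complex.exp ((2 * z + t) * (2 * φ - Real.pi)) =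
      -Complex.exp (t * (2 * φ - Real.pi)) := by
    rw [← Complex.exp_add, ← Complex.exp_add, ← Complex.exp_add, ← mul_neg_one (Complex.exp _),
      ← Complex.exp_neg_pi_mul_I, ← Complex.exp_add]
    ring_nf
  have hz' : t + (z - I).re ≠ 0 := by simpa using hz
  have hshift : I * (z - I) = I * z + 1 := by rw [mul_sub, Complex.I_mul_I, sub_neg_eq_add]
  rw [PhiC_eq_exp_mul_reducedPhi hz, PhiC_eq_exp_mul_reducedPhi hz',
    fstar_PhiC_eq_exp_mul_reducedPhi hz, fstar_PhiC_eq_exp_mul_reducedPhi hz',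
    wfun_eq_gammaWeight, hshift, alphaM, wronIntegrand, casoratian]
  linear_combination -(1 / (2 * Real.pi) * ((I * z + k₂) * (I * z + k₁ + I * t) *
    gammaWeight k₁ k₂ t (I * z) * (reducedPhi k₁ k₂ t ρ (I * z) *
      reducedPhi k₁ k₂ (-t) (-σ) (-(I * z + 1)) -
        reducedPhi k₁ k₂ t ρ (I * z + 1) * reducedPhi k₁ k₂ (-t) (-σ) (-(I * z))))) * hexp

lemma Wron_PhiC_eq_integral {x : ℝ} (hx : t + x ≠ 0) :
    Wron k₁ k₂ t φ (PhiC k₁ k₂ t φ ρ) (PhiC k₁ k₂ t φ σ) x =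
      ∫ s in (0 : ℝ)..1, I * wronIntegrand k₁ k₂ t φ ρ σ (I * x - s) := by
  refine intervalIntegral.integral_congr fun s _ => ?_
  have hIz : I * (x + I * s) = I * x - s := by
    rw [mul_add, ← mul_assoc, Complex.I_mul_I, neg_one_mul, sub_eq_add_neg]
  simp only [wron_integrand_eq (z := x + I * s) (by simpa using hx), hIz]

lemma wronIntegrand_sub_one (h : σ ^ 2 = ρ ^ 2) (hre : u.re ∈ Ioo (1 - k₁) (k₁ - 1))
    (hu : u.im ≠ 0) (hut : u.im + t ≠ 0) (huρ : u.im + ρ ≠ 0) (huσ : u.im + σ ≠ 0) :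
    wronIntegrand k₁ k₂ t φ ρ σ (u - 1) = wronIntegrand k₁ k₂ t φ ρ σ u := by
  have hcoeff : differenceCoeff k₁ k₂ t σ u = differenceCoeff k₁ k₂ t ρ u := by
    rw [differenceCoeff, differenceCoeff, ← Complex.ofReal_pow σ, h, Complex.ofReal_pow]
  have habel := mul_casoratian_eq (reducedPhi_difference_equation (k₂ := k₂) hre.1 hu hut huρ)
    (g := fun u => reducedPhi k₁ k₂ (-t) (-σ) (-u))
    ((reducedPhi_neg_difference_equation hre.2 hu hut huσ).trans (by rw [hcoeff]))
  rw [wronIntegrand, wronIntegrand, mul_gammaWeight_sub_one hu hut]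
  linear_combination -(Complex.exp (t * (2 * φ - Real.pi)) / (2 * Real.pi) *
    gammaWeight k₁ k₂ t u) * habel

end WronskianIntegrand

section WronskianAsymptotics

/-- The product of the four Gamma quotients into which the Gamma functions of `wronIntegrand`
combine. -/
def gammaQuotient (k₁ k₂ t ρ σ : ℝ) (u : ℂ) : ℂ :=
  Complex.Gamma (u + (1 + k₂)) / Complex.Gamma (u + (k₁ + I * t)) *
      (Complex.Gamma (u + (1 - k₂)) / Complex.Gamma (u + (3 / 2 - k₁ + I * ρ))) *
    (Complex.Gamma (-u + -k₂) / Complex.Gamma (-u + (k₁ - 1 - I * t)) *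
      (Complex.Gamma (-u + k₂) / Complex.Gamma (-u + (1 / 2 - k₁ - I * σ))))

/-- What remains of `wronIntegrand` besides `gammaQuotient`: the Casoratian with the Gamma factors
`phiGamma` divided out. -/
def seriesCasoratian (k₁ k₂ t ρ σ : ℝ) (u : ℂ) : ℂ :=
  phiSeries k₁ k₂ t ρ u * phiSeries k₁ k₂ (-t) (-σ) (-(u + 1)) -
    (u + (1 - k₂)) / (u + (3 / 2 - k₁ + I * ρ)) * ((u + k₂) / (u + (k₁ - 1 / 2 + I * σ))) *
      (phiSeries k₁ k₂ t ρ (u + 1) * phiSeries k₁ k₂ (-t) (-σ) (-u))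

/-- The leading factor of the Wronskian: `±D^±(ρ,σ) |y|^{i(σ-ρ)}`, with `±` the sign of `y`. -/
def wronLeading (t φ ρ σ y : ℝ) : ℂ :=
  Real.sign y * Dpm t φ (Real.sign y) ρ σ * ((|y| : ℝ) : ℂ) ^ (I * ((σ : ℂ) - ρ))

variable {k₁ k₂ t φ ρ σ a b : ℝ} {u : ℂ}

lemma phiGamma_add_one_mul_phiGamma_neg (hu : u.im ≠ 0) (hut : u.im + t ≠ 0)
    (huρ : u.im + ρ ≠ 0) (huσ : u.im + σ ≠ 0) :
    phiGamma k₁ k₂ t ρ (u + 1) * phiGamma k₁ k₂ (-t) (-σ) (-u) =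
      (u + (1 - k₂)) / (u + (3 / 2 - k₁ + I * ρ)) * ((u + k₂) / (u + (k₁ - 1 / 2 + I * σ))) *
        (phiGamma k₁ k₂ t ρ u * phiGamma k₁ k₂ (-t) (-σ) (-(u + 1))) := by
  have hplus := mul_phiGamma_add_one (k₁ := k₁) (k₂ := k₂) hu hut huρ
  have hminus := mul_phiGamma_add_one (k₁ := k₁) (k₂ := k₂) (t := -t) (ρ := -σ) (u := -(u + 1))
    (by simpa using hu)
    (by rw [Complex.neg_im, ← neg_add, neg_ne_zero]; simpa using hut)
    (by rw [Complex.neg_im, ← neg_add, neg_ne_zero]; simpa using huσ)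
  rw [show -(u + 1) + 1 = -u by ring] at hminus
  push_cast at hminus
  have h₁ : u + k₁ + I * t ≠ 0 := fun h => hut (by simpa using congrArg Complex.im h)
  have h₂ : u + 1 - k₁ + I * t ≠ 0 := fun h => hut (by simpa using congrArg Complex.im h)
  have h₃ : u + (3 / 2 - k₁ + I * ρ) ≠ 0 := fun h => huρ (by simpa using congrArg Complex.im h)
  have h₄ : u + (k₁ - 1 / 2 + I * σ) ≠ 0 := fun h => huσ (by simpa using congrArg Complex.im h)
  rw [div_mul_div_comm, div_mul_eq_mul_div, eq_div_iff (mul_ne_zero h₃ h₄)]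
  refine mul_left_cancel₀ (mul_ne_zero h₁ h₂) ?_
  linear_combination phiGamma k₁ k₂ (-t) (-σ) (-u) * (u + 1 - k₁ + I * t) *
    (u + (k₁ - 1 / 2 + I * σ)) * hplus - (u + (1 - k₂)) * (u + 1 - k₁ + I * t) *
    phiGamma k₁ k₂ t ρ u * hminus

lemma mul_gammaWeight_mul_phiGamma (hu : u.im ≠ 0) (hut : u.im + t ≠ 0) :
    (u + k₂) * (u + k₁ + I * t) * gammaWeight k₁ k₂ t u *
        (phiGamma k₁ k₂ t ρ u * phiGamma k₁ k₂ (-t) (-σ) (-(u + 1))) =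
      gammaQuotient k₁ k₂ t ρ σ u := by
  have him₁ : (u + (k₁ + I * t)).im ≠ 0 := by simpa using hut
  have him₂ : (-u + (k₁ - I * t)).im ≠ 0 := im_neg_add_sub_ne_zero hut
  have him₃ : (u + k₂).im ≠ 0 := by simpa using hu
  have hne {w : ℂ} (hw : w.im ≠ 0) : w ≠ 0 := fun h => hw (by rw [h, Complex.zero_im])
  have hG₁ := Gamma_ne_zero_of_im_ne_zero him₁
  have hG₂ := Gamma_ne_zero_of_im_ne_zero him₂
  rw [gammaWeight, phiGamma, phiGamma, gammaQuotient,
    show u + (1 + k₂) = u + k₂ + 1 by ring, Complex.Gamma_add_one _ (hne him₃),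
    show -(-(u + 1)) + ((k₁ : ℂ) - I * (-t : ℝ)) = u + (k₁ + I * t) + 1 by push_cast; ring,
    Complex.Gamma_add_one _ (hne him₁),
    show -(u + 1) + (1 - (k₂ : ℂ)) = -u + -k₂ by ring,
    show -(u + 1) + ((k₁ : ℂ) + I * (-t : ℝ)) = -u + (k₁ - 1 - I * t) by push_cast; ring,
    show -(u + 1) + (3 / 2 - (k₁ : ℂ) + I * (-σ : ℝ)) = -u + (1 / 2 - k₁ - I * σ) by
      push_cast; ring, add_assoc u]
  have h₁ := hne him₁
  generalize u + (k₁ + I * t) = w₁ at *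
  generalize -u + (k₁ - I * t) = w₂ at *
  simp only [div_eq_mul_inv, mul_inv]
  field_simp

lemma wronIntegrand_eq_gammaQuotient_mul (hu : u.im ≠ 0) (hut : u.im + t ≠ 0)
    (huρ : u.im + ρ ≠ 0) (huσ : u.im + σ ≠ 0) :
    wronIntegrand k₁ k₂ t φ ρ σ u = Complex.exp (t * (2 * φ - Real.pi)) / (2 * Real.pi) *
      (gammaQuotient k₁ k₂ t ρ σ u * seriesCasoratian k₁ k₂ t ρ σ u) := by
  have hshift := phiGamma_add_one_mul_phiGamma_neg (k₁ := k₁) (k₂ := k₂) hu hut huρ huσ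
  rw [← mul_gammaWeight_mul_phiGamma hu hut, wronIntegrand, casoratian, seriesCasoratian]
  simp only [reducedPhi]
  linear_combination -(Complex.exp (t * (2 * φ - Real.pi)) / (2 * Real.pi) * (u + k₂) *
    (u + k₁ + I * t) * gammaWeight k₁ k₂ t u * phiSeries k₁ k₂ t ρ (u + 1) *
    phiSeries k₁ k₂ (-t) (-σ) (-u)) * hshift

lemma hasInvExpansion_phiSeries (ha : -k₁ < a) :
    HasInvExpansion (vstrip a b) (phiSeries k₁ k₂ t ρ)
      ((k₂ - k₁ + 1 / 2 + I * ρ) * (3 / 2 - k₁ - k₂ + I * ρ) * (1 / 2 - I * t + I * ρ) /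
        (1 + 2 * I * ρ)) := by
  refine (hasInvExpansion_F32 ?_ _).comp_add_const _
  rw [re_phiSeries_excess, re_phiSeries_shift]
  linarith

lemma mul_seriesCasoratian_sub_isBigO (hk₁ : 1 < k₁) :
    (fun u => u * seriesCasoratian k₁ k₂ t ρ σ u - I * (ρ + σ)) =O[vstrip (-1) 0]
      fun u => u⁻¹ := by
  have hL := vstrip_le_cobounded (a := -1) (b := 0)
  have hF {a b t ρ : ℝ} (ha : -1 ≤ a) := hasInvExpansion_phiSeries (k₁ := k₁) (k₂ := k₂) (t := t)
    (ρ := ρ) (a := a) (b := b) (by linarith)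
  have hF₀ : HasInvExpansion (vstrip (-1) 0) (phiSeries k₁ k₂ t ρ) _ := hF le_rfl
  have hF₁ : HasInvExpansion (vstrip (-1) 0) (fun u => phiSeries k₁ k₂ t ρ (u + 1)) _ :=
    (hF (by simp)).comp_add_const 1
  have hG : HasInvExpansion (vstrip (-1) 0) (fun u => phiSeries k₁ k₂ (-t) (-σ) (-u)) _ :=
    (hF (by simp)).comp_neg
  have hG₁ : HasInvExpansion (vstrip (-1) 0) (fun u => phiSeries k₁ k₂ (-t) (-σ) (-(u + 1))) _ :=
    (hF (by simp)).comp_neg.comp_add_const 1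
  have hratio := (HasInvExpansion.add_const_div_add_const hL (1 - k₂) (3 / 2 - k₁ + I * ρ)).mul hL
    (HasInvExpansion.add_const_div_add_const hL k₂ (k₁ - 1 / 2 + I * σ))
  refine ((hF₀.mul hL hG₁).mul_sub_isBigO hL (hratio.mul hL (hF₁.mul hL hG))).congr_left
    fun u => ?_
  rw [seriesCasoratian]
  ring

lemma isOneAddBigOInv_gammaQuotient :
    IsOneAddBigOInv (vstrip a b) fun u => gammaQuotient k₁ k₂ t ρ σ u * u⁻¹ *
      Complex.exp ((1 / 2 + I * t + I * ρ) * Complex.log (I * u.im) -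
        (1 / 2 + I * t + I * σ) * Complex.log (I * (-u).im)) := by
  have hL := vstrip_le_cobounded (a := a) (b := b)
  refine (((isOneAddBigOInv_Gamma_div_Gamma (1 + k₂) (k₁ + I * t)).mul hL
    (isOneAddBigOInv_Gamma_div_Gamma (1 - k₂) (3 / 2 - k₁ + I * ρ))).mul hL
    (((isOneAddBigOInv_Gamma_div_Gamma_neg (-k₂) (k₁ - 1 - I * t)).mul hL
    (isOneAddBigOInv_Gamma_div_Gamma_neg k₂ (1 / 2 - k₁ - I * σ))).mul hL
    (isOneAddBigOInv_exp_log_sub_log_im (-1)))).congr' ?_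
  filter_upwards [hL (eventually_ne_cobounded 0)] with u hu
  have hinv : Complex.exp (-1 * (Complex.log u - Complex.log (I * u.im))) =
      u⁻¹ * Complex.exp (Complex.log (I * u.im)) := by
    rw [neg_one_mul, neg_sub, Complex.exp_sub, Complex.exp_log hu, div_eq_inv_mul]
  rw [gammaQuotient, hinv]
  rw [show (1 / 2 + I * t + I * ρ) * Complex.log (I * u.im) -
      (1 / 2 + I * t + I * σ) * Complex.log (I * (-u).im) =
    (k₁ + I * t - (1 + k₂)) * Complex.log (I * u.im) +
      (3 / 2 - k₁ + I * ρ - (1 - k₂)) * Complex.log (I * u.im) +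
      (k₁ - 1 - I * t - -k₂) * Complex.log (I * (-u).im) +
      (1 / 2 - k₁ - I * σ - k₂) * Complex.log (I * (-u).im) + Complex.log (I * u.im) by ring]
  simp only [Complex.exp_add]
  ring

lemma exp_log_mul_wronLeading {y : ℝ} (hy : y ≠ 0) :
    Complex.exp ((1 / 2 + I * t + I * ρ) * Complex.log (I * y) -
        (1 / 2 + I * t + I * σ) * Complex.log (I * (-y : ℝ))) * wronLeading t φ ρ σ y =
      -(Complex.exp (t * (2 * φ - Real.pi)) / (2 * Real.pi)) := by
  have hpow : (((|y| : ℝ) : ℂ) ^ (I * ((σ : ℂ) - ρ))) =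
      Complex.exp (Real.log |y| * (I * (σ - ρ))) := by
    rw [Complex.cpow_def_of_ne_zero (by simpa using hy), Complex.ofReal_log (abs_nonneg y)]
  have hphase : Complex.exp (Real.sign y * (Real.pi / 2 * I)) * Real.sign y * I = -1 := by
    obtain hsign | hsign := hy.lt_or_gt.imp Real.sign_of_neg Real.sign_of_pos
    · simp [hsign, Complex.exp_neg, Complex.exp_pi_div_two_mul_I]
    · simp [hsign, Complex.exp_pi_div_two_mul_I]
  have hexp : Complex.exp ((1 / 2 + I * t + I * ρ) * Complex.log (I * y) -
        (1 / 2 + I * t + I * σ) * Complex.log (I * (-y : ℝ))) *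
      Complex.exp ((Real.sign y * (Real.pi / 2) * (ρ + σ + 2 * t) : ℝ)) *
      Complex.exp (Real.log |y| * (I * (σ - ρ))) =
      Complex.exp (Real.sign y * (Real.pi / 2 * I)) := by
    rw [← Complex.exp_add, ← Complex.exp_add, log_I_mul_ofReal hy,
      log_I_mul_ofReal (neg_ne_zero.2 hy), abs_neg, Real.sign_neg]
    congr 1
    push_cast
    linear_combination Real.sign y * (Real.pi / 2) * (ρ + σ + 2 * t) * Complex.I_mul_I
  rw [wronLeading, hpow, Dpm]
  push_cast at hexp ⊢
  linear_combination Complex.exp (t * (2 * φ - Real.pi)) / (2 * Real.pi) *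
    (Real.sign y * I * hexp + hphase)

lemma norm_wronLeading {y : ℝ} (hy : y ≠ 0) :
    ‖wronLeading t φ ρ σ y‖ = ‖Dpm t φ (Real.sign y) ρ σ‖ := by
  have hpow : ‖((|y| : ℝ) : ℂ) ^ (I * ((σ : ℂ) - ρ))‖ = 1 := by
    simp [Complex.norm_cpow_eq_rpow_re_of_pos (abs_pos.2 hy)]
  obtain hsign | hsign := hy.lt_or_gt.imp Real.sign_of_neg Real.sign_of_pos <;>
  simp [wronLeading, hsign, hpow]

lemma wronLeading_isBigO_one :
    wronLeading t φ ρ σ =O[cobounded ℝ] fun _ => (1 : ℂ) := by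
  refine .of_bound (‖Dpm t φ 1 ρ σ‖ + ‖Dpm t φ (-1) ρ σ‖) ?_
  filter_upwards [eventually_ne_cobounded 0] with y hy
  rw [norm_wronLeading hy, norm_one, mul_one]
  obtain hsign | hsign := hy.lt_or_gt.imp Real.sign_of_neg Real.sign_of_pos <;>
  simp [hsign]

lemma I_mul_wronIntegrand_sub_isBigO (hk₁ : 1 < k₁) :
    (fun u => I * wronIntegrand k₁ k₂ t φ ρ σ u - (ρ + σ) * wronLeading t φ ρ σ u.im)
      =O[vstrip (-1) 0] fun u => u⁻¹ := by
  have hL := vstrip_le_cobounded (a := -1) (b := 0)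
  have hP := isOneAddBigOInv_gammaQuotient (k₁ := k₁) (k₂ := k₂) (t := t) (ρ := ρ) (σ := σ)
    (a := -1) (b := 0)
  have hQ := mul_seriesCasoratian_sub_isBigO (k₂ := k₂) (t := t) (ρ := ρ) (σ := σ) hk₁
  have hQ₁ : (fun u => u * seriesCasoratian k₁ k₂ t ρ σ u) =O[vstrip (-1) 0] fun _ => (1 : ℂ) :=
    ((hQ.trans (inv_isBigO_one hL)).add (isBigO_const_const (I * (ρ + σ)) one_ne_zero _)).congr_left
      fun u => sub_add_cancel _ _
  have hPQ := ((IsBigO.mul hP hQ₁).congr_right fun u => mul_one _).add hQ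
  have hbdd : (fun u : ℂ => wronLeading t φ ρ σ u.im) =O[vstrip (-1) 0] fun _ => (1 : ℂ) :=
    wronLeading_isBigO_one.comp_tendsto tendsto_im_vstrip
  refine ((hbdd.const_mul_left (-I)).mul hPQ).congr' ?_ (by simp)
  filter_upwards [eventually_im_ne_zero_vstrip, eventually_im_add_ne_zero_vstrip t,
    eventually_im_add_ne_zero_vstrip ρ, eventually_im_add_ne_zero_vstrip σ,
    hL (eventually_ne_cobounded 0)] with u hu hut huρ huσ hu₀
  rw [wronIntegrand_eq_gammaQuotient_mul hu hut huρ huσ]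
  have hE := exp_log_mul_wronLeading (t := t) (φ := φ) (ρ := ρ) (σ := σ) hu
  rw [← Complex.neg_im] at hE
  linear_combination gammaQuotient k₁ k₂ t ρ σ u * seriesCasoratian k₁ k₂ t ρ σ u *
    (-I * (u⁻¹ * u) * hE + I * (Complex.exp (t * (2 * φ - Real.pi)) / (2 * Real.pi)) *
      inv_mul_cancel₀ hu₀) + (ρ + σ) * wronLeading t φ ρ σ u.im * Complex.I_mul_I

end WronskianAsymptotics

section Differentiability

variable {k₁ k₂ t φ ρ σ a b : ℝ} {u : ℂ}

lemma eventually_differentiableAt_phiSeries (ha : -k₁ < a) :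
    ∀ᶠ u in vstrip a b, DifferentiableAt ℂ (phiSeries k₁ k₂ t ρ) u := by
  obtain ⟨r, hr, hra⟩ : ∃ r, 3 / 2 - 2 * k₁ < r ∧ r < a + (3 / 2 - k₁) :=
    exists_between (by linarith)
  have hshift := tendsto_add_const_vstrip (a := a) (b := b) (3 / 2 - k₁ + I * ρ)
  filter_upwards [hshift.eventually (eventually_le_abs_im_vstrip (|r| + 2)),
    eventually_re_mem_Icc_vstrip] with u him hre
  refine differentiableAt_comp_add_const.2 (differentiableAt_F32 (r := r) ?_ ?_ ?_)
  · rwa [re_phiSeries_excess]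
  · rw [Complex.add_re, re_phiSeries_shift]
    linarith [hre.1]
  · linarith

lemma differentiableAt_Gamma_of_im_ne_zero (hu : u.im ≠ 0) :
    DifferentiableAt ℂ Complex.Gamma u :=
  Complex.differentiableAt_Gamma _ fun n h => hu (by simp [h])

lemma differentiableAt_phiGamma (hu : u.im ≠ 0) (hut : u.im + t ≠ 0) (huρ : u.im + ρ ≠ 0) :
    DifferentiableAt ℂ (phiGamma k₁ k₂ t ρ) u := by
  have h₁ : (u + (1 - k₂)).im ≠ 0 := by simpa using hu
  have h₂ : (-u + (k₁ - I * t)).im ≠ 0 := im_neg_add_sub_ne_zero hut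
  have h₃ : (u + (k₁ + I * t)).im ≠ 0 := by simpa using hut
  have h₄ : (u + (3 / 2 - k₁ + I * ρ)).im ≠ 0 := by simpa using huρ
  unfold phiGamma
  have hd₁ := differentiableAt_Gamma_of_im_ne_zero h₁
  have hd₂ := differentiableAt_Gamma_of_im_ne_zero h₂
  have hd₃ := differentiableAt_Gamma_of_im_ne_zero h₃
  have hd₄ := differentiableAt_Gamma_of_im_ne_zero h₄
  have hne := mul_ne_zero (mul_ne_zero (Gamma_ne_zero_of_im_ne_zero h₂)
    (Gamma_ne_zero_of_im_ne_zero h₃)) (Gamma_ne_zero_of_im_ne_zero h₄)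
  fun_prop (disch := assumption)

lemma eventually_differentiableAt_reducedPhi (ha : -k₁ < a) :
    ∀ᶠ u in vstrip a b, DifferentiableAt ℂ (reducedPhi k₁ k₂ t ρ) u := by
  filter_upwards [eventually_differentiableAt_phiSeries ha, eventually_im_ne_zero_vstrip,
    eventually_im_add_ne_zero_vstrip t, eventually_im_add_ne_zero_vstrip ρ] with u h hu hut huρ
  exact (differentiableAt_phiGamma hu hut huρ).mul h

lemma differentiableAt_gammaWeight (hu : u.im ≠ 0) (hut : u.im + t ≠ 0) :
    DifferentiableAt ℂ (gammaWeight k₁ k₂ t) u := by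
  have h₁ : (u + (k₁ + I * t)).im ≠ 0 := by simpa using hut
  have h₂ : (-u + (k₁ - I * t)).im ≠ 0 := im_neg_add_sub_ne_zero hut
  have h₃ : (u + k₂).im ≠ 0 := by simpa using hu
  have h₄ : (-u + k₂).im ≠ 0 := by simpa using hu
  have hd₁ := differentiableAt_Gamma_of_im_ne_zero h₁
  have hd₂ := differentiableAt_Gamma_of_im_ne_zero h₂
  have hd₃ := differentiableAt_Gamma_of_im_ne_zero h₃
  have hd₄ := differentiableAt_Gamma_of_im_ne_zero h₄
  unfold gammaWeight
  fun_prop (disch := assumption)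

lemma differentiableAt_casoratian {f g : ℂ → ℂ} (hf : DifferentiableAt ℂ f u)
    (hf₁ : DifferentiableAt ℂ f (u + 1)) (hg : DifferentiableAt ℂ g u)
    (hg₁ : DifferentiableAt ℂ g (u + 1)) : DifferentiableAt ℂ (casoratian f g) u :=
  (hf.mul (differentiableAt_comp_add_const.2 hg₁)).sub
    ((differentiableAt_comp_add_const.2 hf₁).mul hg)

lemma eventually_differentiableAt_wronIntegrand (hk₁ : 1 < k₁) :
    ∀ᶠ u in vstrip (-1) 0, DifferentiableAt ℂ (wronIntegrand k₁ k₂ t φ ρ σ) u := by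
  have hreduced {t ρ a b : ℝ} (ha : -1 ≤ a) :=
    eventually_differentiableAt_reducedPhi (k₁ := k₁) (k₂ := k₂) (t := t) (ρ := ρ) (a := a) (b := b)
      (by linarith)
  have hshift := tendsto_add_const_vstrip (a := -1) (b := 0) 1
  filter_upwards [eventually_im_ne_zero_vstrip, eventually_im_add_ne_zero_vstrip t,
    hreduced (t := t) (ρ := ρ) le_rfl,
    hshift.eventually (hreduced (t := t) (ρ := ρ) (by simp)),
    tendsto_neg_vstrip.eventually (hreduced (t := -t) (ρ := -σ) (by simp)),
    (tendsto_neg_vstrip.comp hshift).eventually (hreduced (t := -t) (ρ := -σ) (by simp))]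
    with u hu hut hf hf₁ hg hg₁
  have hweight := differentiableAt_gammaWeight (k₁ := k₁) (k₂ := k₂) hu hut
  have hcasoratian := differentiableAt_casoratian hf hf₁ (differentiableAt_comp_neg.2 hg)
    (differentiableAt_comp_neg.2 hg₁)
  unfold wronIntegrand
  fun_prop

end Differentiability

section RectangularContour

variable {h : ℂ → ℂ}

lemma integral_sub_isBigO_inv {c : ℝ → ℂ} (hcont : ∀ᶠ u in vstrip (-1) 0, ContinuousAt h u)
    (hh : (fun u => h u - c u.im) =O[vstrip (-1) 0] fun u => u⁻¹) :
    (fun y : ℝ => (∫ s in (0 : ℝ)..1, h (I * y - s)) - c y) =O[cobounded ℝ] fun y => y⁻¹ := by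
  obtain ⟨K, hK₀, hK⟩ := hh.exists_nonneg
  obtain ⟨N, hN⟩ := eventually_vstrip.1 (hcont.and hK.bound)
  refine .of_bound K ?_
  filter_upwards [tendsto_norm_cobounded_atTop.eventually_ge_atTop N, eventually_ne_cobounded 0]
    with y hy hy₀
  have hmem {s : ℝ} (hs : s ∈ uIcc (0 : ℝ) 1) := hN (I * y - s)
    (by simpa [uIcc_of_le, and_comm] using hs) (by simpa using hy)
  have hint : IntervalIntegrable (fun s : ℝ => h (I * y - s)) volume 0 1 :=
    ContinuousOn.intervalIntegrable fun s hs =>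
      ((hmem hs).1.comp (f := fun s : ℝ => I * y - s) (by fun_prop)).continuousWithinAt
  have hsub : (∫ s in (0 : ℝ)..1, h (I * y - s)) - c y =
      ∫ s in (0 : ℝ)..1, (h (I * y - s) - c y) := by
    simp [intervalIntegral.integral_sub hint intervalIntegrable_const]
  rw [hsub]
  refine (intervalIntegral.norm_integral_le_of_norm_le_const fun s hs => ?_).trans_eq
    (by rw [sub_zero, abs_one, mul_one])
  have him : (I * y - s : ℂ).im = y := by simp
  have hbound := (hmem (uIoc_subset_uIcc hs)).2
  have hnorm := Complex.abs_im_le_norm (I * y - s)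
  rw [him] at hbound hnorm
  refine hbound.trans ?_
  rw [norm_inv, norm_inv, Real.norm_eq_abs]
  have := abs_pos.2 hy₀
  gcongr

lemma integral_sub_eq_of_periodicOn {x y : ℝ}
    (hdiff : DifferentiableOn ℂ h (Icc (-1) 0 ×ℂ uIcc x y))
    (hper : ∀ v ∈ uIcc x y, h (I * v - 1) = h (I * v)) :
    ∫ s in (0 : ℝ)..1, h (I * x - s) = ∫ s in (0 : ℝ)..1, h (I * y - s) := by
  have hrect := Complex.integral_boundary_rect_eq_zero_of_differentiableOn h ⟨-1, x⟩ ⟨0, y⟩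
    (by simpa [uIcc_of_le] using hdiff)
  have hvertical : ∫ v in x..y, h (v * I) = ∫ v in x..y, h (-1 + v * I) :=
    intervalIntegral.integral_congr fun v hv => by
      simpa [mul_comm, sub_eq_neg_add] using (hper v hv).symm
  have hhorizontal (y : ℝ) :
      ∫ s in (0 : ℝ)..1, h (I * y - s) = ∫ s in (-1 : ℝ)..0, h (s + y * I) := by
    simpa [mul_comm, sub_eq_neg_add] using
      intervalIntegral.integral_comp_neg (a := 0) (b := 1) fun s : ℝ => h (s + y * I)
  rw [hhorizontal, hhorizontal]
  simpa [hvertical, sub_eq_zero] using hrect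

lemma abs_le_abs_of_mem_uIcc_mul {c y v : ℝ} (hc : 1 ≤ c) (hv : v ∈ uIcc (c * y) y) :
    |y| ≤ |v| := by
  rcases le_total 0 y with hy | hy
  · rw [uIcc_of_ge (le_mul_of_one_le_left hy hc)] at hv
    exact abs_le_abs_of_nonneg hy hv.1
  · rw [uIcc_of_le (mul_le_of_one_le_left hy hc)] at hv
    exact abs_le_abs_of_nonpos hy hv.2

lemma eventually_integral_sub_eq_zero (hdiff : ∀ᶠ u in vstrip (-1) 0, DifferentiableAt ℂ h u)
    (hper : ∀ᶠ y : ℝ in cobounded ℝ, h (I * y - 1) = h (I * y))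
    (hh : h =O[vstrip (-1) 0] fun u => u⁻¹) :
    ∀ᶠ y : ℝ in cobounded ℝ, ∫ s in (0 : ℝ)..1, h (I * y - s) = 0 := by
  have hzero : Tendsto (fun y : ℝ => ∫ s in (0 : ℝ)..1, h (I * y - s)) (cobounded ℝ) (𝓝 0) := by
    have hO := integral_sub_isBigO_inv (c := 0) (hdiff.mono fun u hu => hu.continuousAt)
      (by simpa using hh)
    simpa using hO.trans_tendsto tendsto_inv₀_cobounded
  obtain ⟨N, hN⟩ := eventually_vstrip.1 hdiff
  rw [← comap_norm_atTop, eventually_comap, eventually_atTop] at hper ⊢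
  obtain ⟨M, hM⟩ := hper
  refine ⟨max (max N M) 1, ?_⟩
  rintro _ hy y rfl
  simp only [sup_le_iff] at hy
  obtain ⟨⟨hyN, hyM⟩, hy₁⟩ := hy
  have hscale : Tendsto (fun c : ℝ => c * y) atTop (cobounded ℝ) := by
    have hy₀ : y ≠ 0 := norm_pos_iff.1 (zero_lt_one.trans_le hy₁)
    exact (tendsto_mul_right_cobounded hy₀).mono_left IsOrderBornology.atTop_le_cobounded
  have hconst : ∀ᶠ c : ℝ in atTop, ∫ s in (0 : ℝ)..1, h (I * (c * y : ℝ) - s) =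
      ∫ s in (0 : ℝ)..1, h (I * y - s) := by
    filter_upwards [eventually_ge_atTop 1] with c hc
    refine integral_sub_eq_of_periodicOn (fun u hu => ?_)
      fun v hv => hM _ (hyM.trans (abs_le_abs_of_mem_uIcc_mul hc hv)) _ rfl
    exact (hN u hu.1 (hyN.trans (abs_le_abs_of_mem_uIcc_mul hc hu.2))).differentiableWithinAt
  exact tendsto_nhds_unique (tendsto_const_nhds.congr' (hconst.mono fun c hc => hc.symm))
    (hzero.comp hscale)

end RectangularContour

section MainTheorem

variable {k₁ k₂ t φ ρ σ : ℝ}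

lemma eventually_Wron_PhiC_eq_integral :
    ∀ᶠ x : ℝ in cobounded ℝ, Wron k₁ k₂ t φ (PhiC k₁ k₂ t φ ρ) (PhiC k₁ k₂ t φ σ) x =
      ∫ s in (0 : ℝ)..1, I * wronIntegrand k₁ k₂ t φ ρ σ (I * x - s) := by
  filter_upwards [eventually_ne_cobounded (-t)] with x hx
  exact Wron_PhiC_eq_integral (mt eq_neg_of_add_eq_zero_right hx)

lemma eventually_wronIntegrand_sub_one (hk₁ : 1 < k₁) (h : σ ^ 2 = ρ ^ 2) :
    ∀ᶠ y : ℝ in cobounded ℝ,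
      wronIntegrand k₁ k₂ t φ ρ σ (I * y - 1) = wronIntegrand k₁ k₂ t φ ρ σ (I * y) := by
  filter_upwards [eventually_ne_cobounded 0, eventually_ne_cobounded (-t),
    eventually_ne_cobounded (-ρ), eventually_ne_cobounded (-σ)] with y hy hyt hyρ hyσ
  have hre : (I * y : ℂ).re = 0 := by simp
  have him : (I * y : ℂ).im = y := by simp
  have hadd {c : ℝ} (hc : y ≠ -c) : (I * y : ℂ).im + c ≠ 0 := by
    rw [him]
    exact mt eq_neg_of_add_eq_zero_left hc
  exact wronIntegrand_sub_one h (hre ▸ ⟨by linarith, by linarith⟩) (him.symm ▸ hy) (hadd hyt)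
    (hadd hyρ) (hadd hyσ)

lemma eventually_Wron_PhiC_eq_zero (hk₁ : 1 < k₁) (h : ρ + σ = 0) :
    ∀ᶠ x : ℝ in cobounded ℝ,
      Wron k₁ k₂ t φ (PhiC k₁ k₂ t φ ρ) (PhiC k₁ k₂ t φ σ) x = 0 := by
  have hsq : σ ^ 2 = ρ ^ 2 := by rw [eq_neg_of_add_eq_zero_left h, neg_sq]
  have hsum : (ρ + σ : ℂ) = 0 := mod_cast h
  have hdecay := I_mul_wronIntegrand_sub_isBigO (k₂ := k₂) (t := t) (φ := φ) (ρ := ρ) (σ := σ) hk₁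
  simp only [hsum, zero_mul, sub_zero] at hdecay
  have hzero := eventually_integral_sub_eq_zero
    ((eventually_differentiableAt_wronIntegrand hk₁).mono fun u hu => hu.const_mul I)
    ((eventually_wronIntegrand_sub_one hk₁ hsq).mono fun y hy => congrArg (I * ·) hy) hdecay
  filter_upwards [eventually_Wron_PhiC_eq_integral, hzero] with x hx hx₀
  rw [hx, hx₀]

lemma Wron_PhiC_sub_wronLeading_isBigO (hk₁ : 1 < k₁) :
    (fun x : ℝ => Wron k₁ k₂ t φ (PhiC k₁ k₂ t φ ρ) (PhiC k₁ k₂ t φ σ) x -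
      (ρ + σ) * wronLeading t φ ρ σ x) =O[cobounded ℝ] fun x => (ρ + σ) / x := by
  rcases eq_or_ne (ρ + σ) 0 with h | h
  · have hsum : (ρ + σ : ℂ) = 0 := mod_cast h
    refine (isBigO_zero _ _).congr' ?_ .rfl
    filter_upwards [eventually_Wron_PhiC_eq_zero hk₁ h] with x hx
    rw [hx, hsum, zero_mul, sub_zero]
  · have hO := integral_sub_isBigO_inv (c := fun y => (ρ + σ) * wronLeading t φ ρ σ y)
      ((eventually_differentiableAt_wronIntegrand hk₁).mono
        fun u hu => (hu.const_mul I).continuousAt)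
      (I_mul_wronIntegrand_sub_isBigO (k₂ := k₂) hk₁)
    refine (hO.const_mul_right h).congr' ?_ .rfl
    filter_upwards [eventually_Wron_PhiC_eq_integral] with x hx
    rw [hx]

end MainTheorem

theorem wronskian_PhiPhi_asymptotics_general (k₁ k₂ : ℝ) (hk₁ : 1 < k₁) (t φ ρ σ : ℝ) :
    ((fun x : ℝ => Wron k₁ k₂ t φ (PhiC k₁ k₂ t φ (ρ : ℂ)) (PhiC k₁ k₂ t φ (σ : ℂ)) x -
        Dpm t φ 1 ρ σ * ((ρ : ℂ) + σ) * ((|x| : ℝ) : ℂ) ^ (I * ((σ : ℂ) - ρ)))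
      =O[atTop] fun x : ℝ => (ρ + σ) / x) ∧
    ((fun x : ℝ => Wron k₁ k₂ t φ (PhiC k₁ k₂ t φ (ρ : ℂ)) (PhiC k₁ k₂ t φ (σ : ℂ)) x +
        Dpm t φ (-1) ρ σ * ((ρ : ℂ) + σ) * ((|x| : ℝ) : ℂ) ^ (I * ((σ : ℂ) - ρ)))
      =O[atBot] fun x : ℝ => (ρ + σ) / x) := by
  have hO := Wron_PhiC_sub_wronLeading_isBigO (k₂ := k₂) (t := t) (φ := φ) (ρ := ρ) (σ := σ) hk₁
  constructor
  · refine (hO.mono IsOrderBornology.atTop_le_cobounded).congr' ?_ .rfl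
    filter_upwards [eventually_gt_atTop 0] with x hx
    rw [wronLeading, Real.sign_of_pos hx]
    push_cast
    ring
  · refine (hO.mono IsOrderBornology.atBot_le_cobounded).congr' ?_ .rfl
    filter_upwards [eventually_lt_atBot 0] with x hx
    rw [wronLeading, Real.sign_of_neg hx]
    push_cast
    ring

/-- Asymptotics of the Wronskian `[Φ_ρ, Φ_σ](x)`:
`[Φ_ρ, Φ_σ](x) = ± D^{±}(ρ,σ)(ρ+σ)|x|^{i(σ−ρ)}(1 + O(1/x))` as `x → ±∞`. -/
theorem wronskian_PhiPhi_asymptotics (k₁ k₂ : ℝ) (hk₁ : 1 < k₁) (hk₂ : 1 < k₂) (t : ℝ)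
    (φ : ℝ) (hφ₀ : 0 < φ) (hφπ : φ < Real.pi) (ρ σ : ℝ) (hρ : 0 ≤ ρ) (hσ : 0 ≤ σ) :
    ((fun x : ℝ => Wron k₁ k₂ t φ (PhiC k₁ k₂ t φ (ρ : ℂ)) (PhiC k₁ k₂ t φ (σ : ℂ)) x -
        Dpm t φ 1 ρ σ * ((ρ : ℂ) + σ) * ((|x| : ℝ) : ℂ) ^ (I * ((σ : ℂ) - ρ)))
      =O[atTop] fun x : ℝ => (ρ + σ) / x) ∧
    ((fun x : ℝ => Wron k₁ k₂ t φ (PhiC k₁ k₂ t φ (ρ : ℂ)) (PhiC k₁ k₂ t φ (σ : ℂ)) x +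
        Dpm t φ (-1) ρ σ * ((ρ : ℂ) + σ) * ((|x| : ℝ) : ℂ) ^ (I * ((σ : ℂ) - ρ)))
      =O[atBot] fun x : ℝ => (ρ + σ) / x) :=
  wronskian_PhiPhi_asymptotics_general k₁ k₂ hk₁ t φ ρ σ
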